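/- arXiv:2503.17751 — 2 statements merged into one kernel-verified Lean document; each statement's English description precedes it below -/
import Mathlib

section
/- Let k be a field of characteristic 0 and let B be a regular local k-algebra whose residue field is formally real. Then B is formally real, and so is its field of fractions. -/
/-- An ideal is real if a sum of squares lies in it only when all the squared elements do. -/
def Ideal.IsReal {R : Type*} [CommRing R] (I : Ideal R) : Prop :=
  ∀ (ι : Type) [Fintype ι] (f : ι → R), ∑ i, f i * f i ∈ I → ∀ i, f i ∈ I

theorem IsSumSq.exists_sum_mul_self {R : Type*} [CommRing R] {s : R} (hs : IsSumSq s) :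
    ∃ (ι : Type) (_ : Fintype ι) (f : ι → R), ∑ i, f i * f i = s := by
  induction hs with
  | zero => exact ⟨Empty, inferInstance, fun _ ↦ 0, by simp⟩
  | sq_add a _ ih =>
    obtain ⟨ι, _, f, rfl⟩ := ih
    exact ⟨Option ι, inferInstance, fun o ↦ o.elim a f, by simp [Fintype.sum_option]⟩

theorem Ideal.IsReal.eq_zero_of_isSumSq {R : Type*} [CommRing R]
    (h : (⊥ : Ideal R).IsReal) {x : R} (hx : IsSumSq x) (hx' : IsSumSq (-x)) : x = 0 := by
  obtain ⟨ι, _, f, hf⟩ := hx.exists_sum_mul_self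
  obtain ⟨κ, _, g, hg⟩ := hx'.exists_sum_mul_self
  have hfg := h (ι ⊕ κ) (Sum.elim f g) (by simp [Fintype.sum_sum_type, hf, hg])
  have hf0 : ∀ i, f i = 0 := fun i ↦ by simpa using hfg (Sum.inl i)
  simp [← hf, hf0]

theorem Ideal.isReal_bot_of_isSumSq {R : Type*} [CommRing R] [NoZeroDivisors R]
    (h : ∀ x : R, IsSumSq x → IsSumSq (-x) → x = 0) : (⊥ : Ideal R).IsReal := by
  classical
  intro ι _ f hf i
  rw [Ideal.mem_bot] at hf ⊢
  rw [← Finset.add_sum_erase _ _ (Finset.mem_univ i)] at hf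
  refine mul_self_eq_zero.mp (h _ (IsSumSq.mul_self _) ?_)
  rw [neg_eq_of_add_eq_zero_right hf]
  exact IsSumSq.sum_mul_self _ _

theorem Ideal.IsReal.comap {R S : Type*} [CommRing R] [CommRing S] (φ : R →+* S) {I : Ideal S}
    (h : I.IsReal) : (I.comap φ).IsReal := by
  intro ι _ f hf i
  exact h ι (fun j ↦ φ (f j)) (by simpa using hf) i

theorem Ideal.IsReal.of_comap {R S : Type*} [CommRing R] [CommRing S] {φ : R →+* S}
    (hφ : Function.Surjective φ) {I : Ideal S} (h : (I.comap φ).IsReal) : I.IsReal := by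
  intro ι _ f hf i
  choose g hg using fun j ↦ hφ (f j)
  have := h ι g (by simpa [hg] using hf) i
  simpa [hg] using this

/-- A nonzero nonunit of a Noetherian domain generating a real ideal forces
the zero ideal to be real. -/
theorem Ideal.IsReal.bot_of_span_singleton {R : Type*} [CommRing R] [IsDomain R]
    [IsNoetherianRing R] {x : R} (hx0 : x ≠ 0) (hx : ¬ IsUnit x)
    (h : (Ideal.span {x}).IsReal) : (⊥ : Ideal R).IsReal := by
  intro ι _ f hf i
  have key : ∀ (n : ℕ) (f : ι → R), ∑ i, f i * f i = 0 → ∀ i, x ^ n ∣ f i := by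
    intro n
    induction n with
    | zero => simp
    | succ n ih =>
      intro f hf
      have hdvd : ∀ i, x ∣ f i := fun i ↦
        Ideal.mem_span_singleton.mp (h ι f (by simp [hf]) i)
      choose g hg using hdvd
      have hg0 : ∑ i, g i * g i = 0 := by
        have : x * x * ∑ i, g i * g i = 0 := by
          rw [Finset.mul_sum, ← hf]
          exact Finset.sum_congr rfl fun i _ ↦ by rw [hg i]; ring
        simpa [hx0] using this
      intro i
      rw [hg i, pow_succ']
      exact mul_dvd_mul_left x (ih g hg0 i)
  rw [← Ideal.iInf_pow_eq_bot_of_isDomain (Ideal.span {x})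
    (by rwa [Ne, Ideal.span_singleton_eq_top]), Ideal.mem_iInf]
  intro n
  rw [Ideal.span_singleton_pow, Ideal.mem_span_singleton]
  exact key n f hf i

open IsLocalRing in
/-- Passing to the quotient by an element outside the square of the maximal ideal lowers the
embedding dimension of a Noetherian local ring. -/
theorem IsLocalRing.spanFinrank_maximalIdeal_quotient_lt {R : Type*} [CommRing R]
    [IsLocalRing R] [IsNoetherianRing R] {x : R} (hx : x ∈ maximalIdeal R)
    (hx2 : x ∉ maximalIdeal R ^ 2) [IsLocalRing (R ⧸ Ideal.span {x})] :
    (maximalIdeal (R ⧸ Ideal.span {x})).spanFinrank < (maximalIdeal R).spanFinrank := by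
  classical
  have fg := (maximalIdeal R).fg_of_isNoetherianRing
  have fin := Submodule.FG.finite_generators fg
  have hspan : Ideal.span (maximalIdeal R).generators = maximalIdeal R :=
    (maximalIdeal R).span_generators
  obtain ⟨g, hg, u, hu, r, hr, hxe⟩ : ∃ g ∈ (maximalIdeal R).generators, ∃ u : R, IsUnit u ∧
      ∃ r ∈ Ideal.span ((maximalIdeal R).generators \ {g}), x = u * g + r := by
    by_contra! hcon
    refine hx2 ?_
    have hmem : ∀ g ∈ (maximalIdeal R).generators, g ∈ maximalIdeal R := fun g hg ↦
      hspan ▸ Ideal.subset_span hg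
    obtain ⟨c, hc, hcx⟩ := (Submodule.mem_span_set (R := R)).mp (hspan.symm ▸ hx :
      x ∈ Ideal.span (maximalIdeal R).generators)
    rw [← hcx, pow_two]
    refine Ideal.sum_mem _ fun g hg ↦ Ideal.mul_mem_mul ?_ (hmem g (hc hg))
    rw [mem_maximalIdeal, mem_nonunits_iff]
    intro hu
    refine hcon g (hc hg) (c g) hu (∑ g' ∈ c.support.erase g, c g' * g') ?_ ?_
    · refine Ideal.sum_mem _ fun g' hg' ↦ Ideal.mul_mem_left _ _ (Ideal.subset_span ?_)
      rw [Finset.mem_erase] at hg'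
      exact ⟨hc hg'.2, hg'.1⟩
    · rw [← hcx]
      exact (Finset.add_sum_erase _ (fun g ↦ c g * g) hg).symm
  let q := Ideal.Quotient.mk (Ideal.span {x})
  have hq : Function.Surjective q := Ideal.Quotient.mk_surjective
  have hmax : Ideal.span (q '' ((maximalIdeal R).generators \ {g})) =
      maximalIdeal (R ⧸ Ideal.span {x}) := by
    rw [← map_maximalIdeal_of_surjective q hq, ← Ideal.map_span]
    refine le_antisymm (Ideal.map_mono ((Ideal.span_mono Set.sdiff_subset).trans hspan.le)) ?_
    rw [← hspan, Ideal.map_le_iff_le_comap, Ideal.span_le]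
    intro g' hg'
    rw [hspan]
    by_cases hgg : g' = g
    · subst hgg
      have hqr : q u * q g' = - q r := by
        rw [eq_neg_iff_add_eq_zero, ← map_mul, ← map_add, ← hxe]
        exact Ideal.Quotient.eq_zero_iff_mem.mpr (Ideal.mem_span_singleton_self x)
      rw [SetLike.mem_coe, Ideal.mem_comap, ← Ideal.unit_mul_mem_iff_mem _ (hu.map q), hqr]
      exact neg_mem (Ideal.mem_map_of_mem q hr)
    · exact Ideal.mem_map_of_mem q (Ideal.subset_span ⟨hg', hgg⟩)
  rw [← hmax, ← Submodule.FG.generators_ncard fg]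
  calc _ ≤ (q '' ((maximalIdeal R).generators \ {g})).ncard :=
        Submodule.spanFinrank_span_le_ncard_of_finite (fin.sdiff.image _)
    _ ≤ ((maximalIdeal R).generators \ {g}).ncard := Set.ncard_image_le fin.sdiff
    _ < _ := Set.ncard_sdiff_singleton_lt_of_mem hg fin

/-- In a Noetherian local ring, a prime principal ideal whose generator lies in no minimal prime
forces the ring to be a domain. -/
theorem IsLocalRing.isDomain_of_span_singleton_isPrime {R : Type*} [CommRing R]
    [IsLocalRing R] [IsNoetherianRing R] {x : R} (hx : (Ideal.span {x}).IsPrime)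
    (hmin : ∀ p ∈ minimalPrimes R, x ∉ p) : IsDomain R := by
  obtain ⟨p, hp, hpx⟩ := Ideal.exists_minimalPrimes_le (bot_le : (⊥ : Ideal R) ≤ Ideal.span {x})
  have hpp : p.IsPrime := hp.1.1
  have hxp : x ∉ p := hmin p hp
  have hbot : p = ⊥ := by
    refine Submodule.eq_bot_of_le_smul_of_le_jacobson_bot (Ideal.span {x}) p
      p.fg_of_isNoetherianRing ?_ (IsLocalRing.jacobson_eq_maximalIdeal (⊥ : Ideal R) bot_ne_top ▸
        IsLocalRing.le_maximalIdeal hx.ne_top)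
    intro y hy
    obtain ⟨z, rfl⟩ := Ideal.mem_span_singleton.mp (hpx hy)
    exact Ideal.mul_mem_mul (Ideal.mem_span_singleton_self x)
      ((hpp.mem_or_mem hy).resolve_left hxp)
  subst hbot
  exact IsDomain.of_bot_isPrime R

open IsLocalRing in
/-- A Noetherian local ring of positive dimension has an element of its maximal ideal outside the
square of the maximal ideal and outside all minimal primes. -/
theorem IsLocalRing.exists_mem_maximalIdeal_notMem_sq_notMem_minimalPrimes {R : Type*}
    [CommRing R] [IsLocalRing R] [IsNoetherianRing R] (hdim : (maximalIdeal R).height ≠ 0) :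
    ∃ x ∈ maximalIdeal R, x ∉ maximalIdeal R ^ 2 ∧ ∀ p ∈ minimalPrimes R, x ∉ p := by
  by_contra! hcon
  have hnot : maximalIdeal R ∉ minimalPrimes R := fun h ↦
    hdim (Ideal.height_eq_zero_iff.mpr h)
  have hfin := (minimalPrimes.finite_of_isNoetherianRing R).insert (maximalIdeal R ^ 2)
  have hsub : (maximalIdeal R : Set R) ⊆
      ⋃ i ∈ insert (maximalIdeal R ^ 2) (minimalPrimes R), (id i : Ideal R) := by
    intro x hx
    rw [Set.mem_iUnion₂]
    by_cases hx2 : x ∈ maximalIdeal R ^ 2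
    · exact ⟨_, Set.mem_insert _ _, hx2⟩
    · obtain ⟨p, hp, hxp⟩ := hcon x hx hx2
      exact ⟨p, Set.mem_insert_of_mem _ hp, hxp⟩
  obtain ⟨p, hp, hle⟩ := (Ideal.subset_union_prime_finite hfin (f := id)
    (maximalIdeal R ^ 2) (maximalIdeal R ^ 2) fun i hi hne _ ↦
      ((Set.mem_insert_iff.mp hi).resolve_left hne).1.1).mp hsub
  rcases Set.mem_insert_iff.mp hp with rfl | hp
  · have hbot : maximalIdeal R = ⊥ := by
      refine Submodule.eq_bot_of_le_smul_of_le_jacobson_bot (maximalIdeal R) _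
        (maximalIdeal R).fg_of_isNoetherianRing ?_ (maximalIdeal_le_jacobson _)
      simpa [pow_two] using hle
    exact hdim (by rw [hbot]; simp)
  · have hpp : p.IsPrime := hp.1.1
    exact hnot ((le_antisymm hle (le_maximalIdeal hpp.ne_top)) ▸ hp)

open IsLocalRing in
/-- A regular local ring whose maximal ideal is real is a domain whose zero ideal is real. -/
theorem IsRegularLocalRing.isDomain_and_isReal_bot {R : Type*} [CommRing R]
    [IsRegularLocalRing R] (hR : (maximalIdeal R).IsReal) :
    IsDomain R ∧ (⊥ : Ideal R).IsReal := by
  induction hd : (maximalIdeal R).spanFinrank using Nat.strong_induction_on generalizing R with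
  | _ d ih =>
  have hreg := (isRegularLocalRing_iff R).mp inferInstance
  by_cases hbot : maximalIdeal R = ⊥
  · have := (isField_iff_maximalIdeal_eq.mpr hbot).isDomain
    exact ⟨this, hbot ▸ hR⟩
  have hdim : (maximalIdeal R).height ≠ 0 := by
    intro h
    rw [← maximalIdeal_height_eq_ringKrullDim, h] at hreg
    exact hbot ((Submodule.spanFinrank_eq_zero_iff_eq_bot
      (maximalIdeal R).fg_of_isNoetherianRing).mp (by exact_mod_cast hreg))
  obtain ⟨x, hx, hx2, hmin⟩ := exists_mem_maximalIdeal_notMem_sq_notMem_minimalPrimes hdim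
  have : Nontrivial (R ⧸ Ideal.span {x}) := Ideal.Quotient.nontrivial_iff.mpr fun h ↦
    hx (Ideal.span_singleton_eq_top.mp h)
  have : IsLocalRing (R ⧸ Ideal.span {x}) :=
    IsLocalRing.of_surjective' _ Ideal.Quotient.mk_surjective
  have hlt := spanFinrank_maximalIdeal_quotient_lt hx hx2
  have hregx : IsRegularLocalRing (R ⧸ Ideal.span {x}) := by
    apply IsRegularLocalRing.of_spanFinrank_maximalIdeal_le
    have h1 := Ideal.height_le_ringKrullDim_quotient_add_one hx
    rw [maximalIdeal_height_eq_ringKrullDim, ← hreg] at h1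
    have h2 : (((maximalIdeal (R ⧸ Ideal.span {x})).spanFinrank + 1 : ℕ) : WithBot ℕ∞) ≤
        ringKrullDim (R ⧸ Ideal.span {x}) + 1 := le_trans (by exact_mod_cast hlt) h1
    push_cast at h2
    exact ENat.WithBot.add_le_add_one_right_iff.mp h2
  have hlocal : IsLocalHom (Ideal.Quotient.mk (Ideal.span {x})) :=
    IsLocalHom.of_surjective _ Ideal.Quotient.mk_surjective
  obtain ⟨hdom, hreal⟩ := ih _ (hd ▸ hlt) (R := R ⧸ Ideal.span {x})
    (Ideal.IsReal.of_comap Ideal.Quotient.mk_surjective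
      (by rwa [maximalIdeal_comap])) rfl
  have hprime : (Ideal.span {x}).IsPrime := (Ideal.Quotient.isDomain_iff_prime _).mp hdom
  have hdomR := isDomain_of_span_singleton_isPrime hprime hmin
  refine ⟨hdomR, Ideal.IsReal.bot_of_span_singleton (x := x) ?_ hx ?_⟩
  · rintro rfl
    exact hx2 (zero_mem _)
  · have := hreal.comap (Ideal.Quotient.mk (Ideal.span {x}))
    rwa [← RingHom.ker_eq_comap_bot, Ideal.mk_ker] at this

theorem IsSumSq.mul_self_mul {R : Type*} [CommRing R] {s : R} (hs : IsSumSq s) (a : R) :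
    IsSumSq (a * a * s) := (IsSumSq.mul_self a).mul hs

theorem IsSumSq.exists_algebraMap_eq {R K : Type*} [CommRing R] [CommRing K] [Algebra R K]
    (M : Submonoid R) [IsLocalization M K] {x : K} (hx : IsSumSq x) :
    ∃ b ∈ M, ∃ s : R, IsSumSq s ∧ algebraMap R K (b * b) * x = algebraMap R K s := by
  induction hx with
  | zero => exact ⟨1, one_mem _, 0, IsSumSq.zero, by simp⟩
  | sq_add a _ ih =>
    obtain ⟨b, hb, s, hs, h⟩ := ih
    obtain ⟨⟨r, c⟩, hc⟩ := IsLocalization.surj M a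
    refine ⟨c * b, mul_mem c.2 hb, (b * r) * (b * r) + c * c * s,
      IsSumSq.sq_add _ (hs.mul_self_mul _), ?_⟩
    simp only [map_mul, map_add] at h hc ⊢
    rw [← h, ← hc]
    ring

/-- A localization at non-zero-divisors of a formally real ring is formally real. -/
theorem IsLocalization.eq_zero_of_isSumSq {R K : Type*} [CommRing R] [CommRing K] [Algebra R K]
    (M : Submonoid R) [IsLocalization M K]
    (h : ∀ x : R, IsSumSq x → IsSumSq (-x) → x = 0)
    (hM : M ≤ nonZeroDivisors R) {x : K} (hx : IsSumSq x) (hx' : IsSumSq (-x)) : x = 0 := by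
  obtain ⟨b, hb, s, hs, hbs⟩ := hx.exists_algebraMap_eq M
  obtain ⟨c, hc, t, ht, hct⟩ := hx'.exists_algebraMap_eq M
  have hst : -(c * c * s) = b * b * t := by
    apply IsLocalization.injective K hM
    rw [map_neg, map_mul _ _ s, map_mul _ _ t, ← hbs, ← hct, map_mul, map_mul]
    ring
  have hzero := h (c * c * s) (hs.mul_self_mul c) (hst ▸ ht.mul_self_mul b)
  have hunit : IsUnit (algebraMap R K (c * c * (b * b))) :=
    IsLocalization.map_units K
      (⟨_, mul_mem (mul_mem hc hc) (mul_mem hb hb)⟩ : M)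
  rw [← hunit.mul_right_eq_zero, map_mul, mul_assoc, hbs, ← map_mul, hzero, map_zero]

/-- A regular local algebra `B` over a field of characteristic zero whose residue field is
formally real is itself formally real, and so is its field of fractions. Regularity is
expressed as: `B` is Noetherian local and the dimension of its cotangent space over the
residue field equals its Krull dimension. -/
theorem stmt7 (k B : Type) [Field k] [CharZero k] [CommRing B] [Algebra k B]
    [IsNoetherianRing B] [IsLocalRing B]
    (hreg : ((Module.finrank (IsLocalRing.ResidueField B)
        (IsLocalRing.CotangentSpace B) : ℕ∞) : WithBot ℕ∞) = ringKrullDim B)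
    (hres : ∀ x : IsLocalRing.ResidueField B, IsSumSq x → IsSumSq (-x) → x = 0) :
    (∀ x : B, IsSumSq x → IsSumSq (-x) → x = 0) ∧
    (∀ x : FractionRing B, IsSumSq x → IsSumSq (-x) → x = 0) := by
  have : IsRegularLocalRing B := (IsRegularLocalRing.iff_finrank_cotangentSpace B).mpr hreg
  have hreal : (IsLocalRing.maximalIdeal B).IsReal := by
    have := (Ideal.isReal_bot_of_isSumSq hres).comap (IsLocalRing.residue B)
    rwa [← RingHom.ker_eq_comap_bot, IsLocalRing.ker_residue] at this
  have hB : ∀ x : B, IsSumSq x → IsSumSq (-x) → x = 0 := fun _ ↦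
    (IsRegularLocalRing.isDomain_and_isReal_bot hreal).2.eq_zero_of_isSumSq
  exact ⟨hB, fun _ ↦ IsLocalization.eq_zero_of_isSumSq (nonZeroDivisors B) hB le_rfl⟩
end

section
/- Let f ∈ ℝ[x, y, z] be a square-free polynomial that is semidefinite on ℝ³ (i.e., f ≥ 0 everywhere or f ≤ 0 everywhere on ℝ³). Then the Pythagoras number of ℝ[x, y, z]/(f) is finite. -/
/-- `B` has finite Pythagoras number: there is `n` such that every sum of squares in `B`
is a sum of `n` squares. -/
def HasFinitePythagorasNumber (B : Type) [CommRing B] : Prop :=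
  ∃ n : ℕ, ∀ b : B, IsSumSq b → ∃ f : Fin n → B, b = ∑ i, f i ^ 2

section HilbertSeventeenth

open Polynomial

/-- A linearly ordered field whose polynomials satisfy the intermediate value theorem. -/
def PolyIVT (R : Type*) [Field R] [LinearOrder R] : Prop :=
  ∀ (p : R[X]) (a b : R), a < b → p.eval a < 0 → 0 < p.eval b → ∃ c, a < c ∧ c < b ∧ p.eval c = 0

namespace PolyIVT

variable {R : Type*} [Field R] [LinearOrder R] [IsStrictOrderedRing R]

theorem exists_root (h : PolyIVT R) {p : R[X]} {a b : R} (hab : a < b)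
    (hp : p.eval a * p.eval b < 0) : ∃ c, a < c ∧ c < b ∧ p.eval c = 0 := by
  rcases mul_neg_iff.mp hp with ⟨h1, h2⟩ | ⟨h1, h2⟩
  · obtain ⟨c, hc⟩ := h (-p) a b hab (by simpa using h1) (by simpa using h2)
    exact ⟨c, by simpa using hc⟩
  · exact h p a b hab h1 h2

theorem exists_derivative_root_of_consecutive (h : PolyIVT R) {p : R[X]} {a b : R} (hab : a < b)
    (hp : p ≠ 0) (ha : p.eval a = 0) (hb : p.eval b = 0)
    (hno : ∀ c, a < c → c < b → p.eval c ≠ 0) :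
    ∃ c, a < c ∧ c < b ∧ (derivative p).eval c = 0 := by
  obtain ⟨q, hq, hqa⟩ := exists_eq_pow_rootMultiplicity_mul_and_not_dvd p hp a
  have hq0 : q ≠ 0 := by rintro rfl; simp at hqa
  obtain ⟨r, hr, hrb⟩ := exists_eq_pow_rootMultiplicity_mul_and_not_dvd q hq0 b
  rw [dvd_iff_isRoot, IsRoot.def] at hqa hrb
  obtain ⟨m, hm⟩ : ∃ m, rootMultiplicity a p = m + 1 :=
    Nat.exists_eq_succ_of_ne_zero ((rootMultiplicity_pos hp).mpr ha).ne'
  have hqb : q.eval b = 0 := by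
    rw [hq, eval_mul, eval_pow] at hb
    have : (eval b (X - C a)) ≠ 0 := by simpa [sub_eq_zero] using hab.ne'
    exact (mul_eq_zero.mp hb).resolve_left (pow_ne_zero _ this)
  obtain ⟨n, hn⟩ : ∃ n, rootMultiplicity b q = n + 1 :=
    Nat.exists_eq_succ_of_ne_zero ((rootMultiplicity_pos hq0).mpr hqb).ne'
  rw [hm] at hq
  rw [hn] at hr
  have hra : r.eval a ≠ 0 := by
    intro h0; apply hqa; rw [hr, eval_mul, h0, mul_zero]
  have hpos : 0 < r.eval a * r.eval b := by
    by_contra hcon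
    have hlt := lt_of_le_of_ne (not_lt.mp hcon) (mul_ne_zero hra hrb)
    obtain ⟨c, hc1, hc2, hc⟩ := h.exists_root hab hlt
    apply hno c hc1 hc2
    rw [hq, hr, eval_mul, eval_mul, hc, mul_zero, mul_zero]
  set s : R[X] := (m + 1 : R[X]) * (X - C b) * r + (n + 1 : R[X]) * (X - C a) * r
    + (X - C a) * (X - C b) * derivative r with hs
  have hd : derivative p = (X - C a) ^ m * (X - C b) ^ n * s := by
    rw [hq, hr, hs]
    simp only [derivative_mul, derivative_X_sub_C_pow]
    simp
    ring
  have hba : 0 < b - a := sub_pos.mpr hab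
  have hprod : s.eval a * s.eval b < 0 := by
    have e1 : s.eval a = (m + 1) * (a - b) * r.eval a := by simp [hs]
    have e2 : s.eval b = (n + 1) * (b - a) * r.eval b := by simp [hs]
    rw [e1, e2]
    have : 0 < ((m : R) + 1) * (n + 1) * (b - a) ^ 2 * (r.eval a * r.eval b) := by positivity
    linarith
  obtain ⟨c, hc1, hc2, hc⟩ := h.exists_root hab hprod
  exact ⟨c, hc1, hc2, by rw [hd, eval_mul, hc, mul_zero]⟩

theorem rolle (h : PolyIVT R) {p : R[X]} {a b : R} (hab : a < b)
    (hp : p ≠ 0) (ha : p.eval a = 0) (hb : p.eval b = 0) :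
    ∃ c, a < c ∧ c < b ∧ (derivative p).eval c = 0 := by
  classical
  set S := p.roots.toFinset.filter (a < ·) with hS
  have hbS : b ∈ S := by simp [hS, hp, hb, hab]
  have hmem := S.min'_mem ⟨b, hbS⟩
  set b' := S.min' ⟨b, hbS⟩
  have hmin : ∀ c ∈ S, b' ≤ c := fun c hc => S.min'_le c hc
  simp only [hS, Finset.mem_filter, Multiset.mem_toFinset, mem_roots hp, IsRoot.def] at hmem hmin
  obtain ⟨c, h1, h2, h3⟩ := h.exists_derivative_root_of_consecutive hmem.2 hp ha hmem.1
    (fun c h1 h2 h3 => absurd (hmin c ⟨h3, h1⟩) (not_le.mpr h2))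
  exact ⟨c, h1, h2.trans_le (hmin b ⟨hb, hab⟩), h3⟩

theorem eval_lt_eval (h : PolyIVT R) {p : R[X]} {a b : R} (hab : a < b)
    (hd : ∀ c, a < c → c < b → 0 < (derivative p).eval c) : p.eval a < p.eval b := by
  by_contra hcon
  push Not at hcon
  have hba : 0 < b - a := sub_pos.mpr hab
  set s := (p.eval b - p.eval a) / (b - a) with hs
  have hs0 : s ≤ 0 := div_nonpos_of_nonpos_of_nonneg (by linarith) hba.le
  set q : R[X] := p - C (p.eval a) - C s * (X - C a) with hq
  have hdq : derivative q = derivative p - C s := by simp [hq]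
  have hex : ∃ c, a < c ∧ c < b ∧ (derivative q).eval c = 0 := by
    by_cases h0 : q = 0
    · obtain ⟨c, h1, h2⟩ := exists_between hab
      exact ⟨c, h1, h2, by simp [h0]⟩
    · refine h.rolle hab h0 (by simp [hq]) ?_
      simp only [hq, eval_sub, eval_C, eval_mul, eval_X, hs]
      field_simp
      ring
  obtain ⟨c, h1, h2, h3⟩ := hex
  have := hd c h1 h2
  rw [hdq, eval_sub, eval_C] at h3
  linarith

end PolyIVT

namespace PolyIVT
variable {R : Type*} [Field R] [LinearOrder R] [IsStrictOrderedRing R]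

theorem pos_or_neg_of_no_root (h : PolyIVT R) {p : R[X]} {a b : R}
    (hno : ∀ c, a < c → c < b → p.eval c ≠ 0) :
    (∀ c, a < c → c < b → 0 < p.eval c) ∨ (∀ c, a < c → c < b → p.eval c < 0) := by
  by_contra! hcon
  obtain ⟨⟨c, hc1, hc2, hc⟩, ⟨e, he1, he2, he⟩⟩ := hcon
  have hc' := lt_of_le_of_ne hc (hno c hc1 hc2)
  have he' := lt_of_le_of_ne he (hno e he1 he2).symm
  rcases lt_trichotomy c e with hlt | rfl | hlt
  · obtain ⟨x, h1, h2, h3⟩ := h.exists_root hlt (mul_neg_of_neg_of_pos hc' he')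
    exact hno x (hc1.trans h1) (h2.trans he2) h3
  · exact absurd hc' (not_lt.mpr he)
  · obtain ⟨x, h1, h2, h3⟩ := h.exists_root hlt (mul_neg_of_pos_of_neg he' hc')
    exact hno x (he1.trans h1) (h2.trans hc2) h3

theorem eval_left_nonneg (h : PolyIVT R) {p : R[X]} {a b : R} (hab : a < b)
    (hpos : ∀ c, a < c → c < b → 0 < p.eval c) : 0 ≤ p.eval a := by
  by_contra! hcon
  obtain ⟨c, h1, h2⟩ := exists_between hab
  obtain ⟨x, h3, h4, h5⟩ := h p a c h1 hcon (hpos c h1 h2)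
  exact (hpos x h3 (h4.trans h2)).ne' h5

theorem eval_right_nonneg (h : PolyIVT R) {p : R[X]} {a b : R} (hab : a < b)
    (hpos : ∀ c, a < c → c < b → 0 < p.eval c) : 0 ≤ p.eval b := by
  by_contra! hcon
  obtain ⟨c, h1, h2⟩ := exists_between hab
  obtain ⟨x, h3, h4, h5⟩ := h.exists_root h2 (mul_neg_of_pos_of_neg (hpos c h1 h2) hcon)
  exact (hpos x (h1.trans h3) h4).ne' h5

end PolyIVT

section Transfer

variable {M L T : Type*} [CommRing M] [Field L] [LinearOrder L] [IsStrictOrderedRing L]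
  [Field T] [LinearOrder T] [IsStrictOrderedRing T] {i : M →+* L} {j : M →+* T}

/-- Two ring homomorphisms to ordered fields induce the same positivity relation. -/
def SamePos (i : M →+* L) (j : M →+* T) : Prop := ∀ m, 0 < i m ↔ 0 < j m

namespace SamePos

theorem lt_iff (hij : SamePos i j) {a b : M} : i a < i b ↔ j a < j b := by
  have := hij (b - a)
  simpa using this

theorem le_iff (hij : SamePos i j) {a b : M} : i a ≤ i b ↔ j a ≤ j b := by
  rw [← not_lt, ← not_lt, hij.lt_iff]

omit [IsStrictOrderedRing L] [IsStrictOrderedRing T] in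
theorem eval_pos_iff (hij : SamePos i j) (h : M[X]) (m : M) :
    0 < (h.map i).eval (i m) ↔ 0 < (h.map j).eval (j m) := by
  rw [eval_map_apply, eval_map_apply, hij]

theorem eval_neg_iff (hij : SamePos i j) (h : M[X]) (m : M) :
    (h.map i).eval (i m) < 0 ↔ (h.map j).eval (j m) < 0 := by
  simpa using hij.eval_pos_iff (-h) m

theorem eval_nonneg_iff (hij : SamePos i j) (h : M[X]) (m : M) :
    0 ≤ (h.map i).eval (i m) ↔ 0 ≤ (h.map j).eval (j m) := by
  rw [← not_lt, ← not_lt, hij.eval_neg_iff]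

/-- All roots in `L` of polynomials over `M` of degree less than `d` come from `M`. -/
def RootsBelow (i : M →+* L) (d : ℕ) : Prop :=
  ∀ h : M[X], h.natDegree < d → h.map i ≠ 0 → ∀ x : L, (h.map i).eval x = 0 → x ∈ i.range

theorem eval_pos_of_eval_pos (hij : SamePos i j) (hi : Function.Injective i)
    (hL : PolyIVT L) (hT : PolyIVT T) {d : ℕ} (hd : RootsBelow i d) (h : M[X])
    (hdeg : h.natDegree < d) {a b : M}
    (hpos : ∀ x, i a < x → x < i b → 0 < (h.map i).eval x) {y : T} (hay : j a < y) (hyb : y < j b) :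
    0 < (h.map j).eval y := by
  classical
  induction hn : h.natDegree using Nat.strong_induction_on generalizing h a b y with
  | _ n ih =>
  have hab : i a < i b := hij.lt_iff.mpr (hay.trans hyb)
  by_cases hn0 : n = 0
  · rw [hn0] at hn
    obtain ⟨x, h1, h2⟩ := exists_between hab
    have := hpos x h1 h2
    rw [eq_C_of_natDegree_eq_zero hn] at this ⊢
    simpa using (hij _).mp (by simpa using this)
  have hder : (derivative h).natDegree < n := hn ▸ natDegree_derivative_lt (hn ▸ hn0)
  have hne : (derivative h).map i ≠ 0 := by
    rw [← derivative_map]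
    intro h0
    have := derivative_eq_zero.mp h0
    rw [natDegree_map_eq_of_injective hi] at this
    omega
  induction hN : (((derivative h).map i).roots.toFinset.filter (fun x => i a < x ∧ x < i b)).card
    using Nat.strong_induction_on generalizing a b y with
  | _ N ihN =>
  by_cases hex : ∃ r, i a < r ∧ r < i b ∧ ((derivative h).map i).eval r = 0
  · obtain ⟨_, hr1, hr2, hr⟩ := hex
    obtain ⟨m, rfl⟩ := hd _ (hder.trans (hn ▸ hdeg)) hne _ hr
    rcases lt_trichotomy y (j m) with hy | rfl | hy
    · refine ihN _ ?_ (fun x h1 h2 => hpos x h1 (h2.trans hr2)) hay hy hr1 rfl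
      rw [← hN]
      refine Finset.card_lt_card (Finset.ssubset_iff_of_subset ?_ |>.mpr ⟨i m, ?_, ?_⟩)
      · intro x
        simp only [Finset.mem_filter]
        exact fun hx => ⟨hx.1, hx.2.1, hx.2.2.trans hr2⟩
      · simp [hne, hr, hr1, hr2]
      · simp
    · exact (hij.eval_pos_iff h m).mp (hpos _ hr1 hr2)
    · refine ihN _ ?_ (fun x h1 h2 => hpos x (hr1.trans h1) h2) hy hyb hr2 rfl
      rw [← hN]
      refine Finset.card_lt_card (Finset.ssubset_iff_of_subset ?_ |>.mpr ⟨i m, ?_, ?_⟩)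
      · intro x
        simp only [Finset.mem_filter]
        exact fun hx => ⟨hx.1, hr1.trans hx.2.1, hx.2.2⟩
      · simp [hne, hr, hr1, hr2]
      · simp
  · push Not at hex
    rcases hL.pos_or_neg_of_no_root hex with hs | hs
    · have h2 : (h.map j).eval (j a) < (h.map j).eval y := by
        refine hT.eval_lt_eval hay fun c hc1 hc2 => ?_
        rw [derivative_map]
        exact ih _ hder (derivative h) (hder.trans (hn ▸ hdeg)) hs hc1 (hc2.trans hyb) rfl
      exact ((hij.eval_nonneg_iff h a).mp (hL.eval_left_nonneg hab hpos)).trans_lt h2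
    · have h2 : ((-h).map j).eval y < ((-h).map j).eval (j b) := by
        refine hT.eval_lt_eval hyb fun c hc1 hc2 => ?_
        rw [derivative_map, derivative_neg]
        refine ih _ hder (-derivative h) (by rw [natDegree_neg]; exact hder.trans (hn ▸ hdeg)) ?_
          (hay.trans hc1) hc2 (natDegree_neg _)
        intro x h1 h2
        simpa using hs x h1 h2
      have h3 := (hij.eval_nonneg_iff h b).mp (hL.eval_right_nonneg hab hpos)
      simp only [Polynomial.map_neg, eval_neg] at h2
      linarith

omit [IsStrictOrderedRing L] in
theorem exists_interval_avoiding {α : L} (hα : α ∉ i.range) (S : Finset L)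
    (hS : ∀ s ∈ S, s ∈ i.range) {a₀ b₀ : M} (ha₀ : i a₀ < α) (hb₀ : α < i b₀) :
    ∃ a b : M, i a < α ∧ α < i b ∧ ∀ s ∈ S, i a < s → ¬ s < i b := by
  classical
  induction S using Finset.induction_on with
  | empty => exact ⟨a₀, b₀, ha₀, hb₀, by simp⟩
  | insert s S hs ih =>
    obtain ⟨a, b, ha, hb, hab⟩ := ih fun s hs => hS s (Finset.mem_insert_of_mem hs)
    obtain ⟨m, rfl⟩ := hS s (Finset.mem_insert_self _ _)
    have hm : i m ≠ α := by rintro rfl; exact hα ⟨m, rfl⟩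
    by_cases hin : i a < i m ∧ i m < i b
    · rcases hm.lt_or_gt with hlt | hlt
      · refine ⟨m, b, hlt, hb, fun t ht h1 => ?_⟩
        rcases Finset.mem_insert.mp ht with rfl | ht
        · exact absurd h1 (lt_irrefl _)
        · exact hab t ht (hin.1.trans h1)
      · refine ⟨a, m, ha, hlt, fun t ht h1 h2 => ?_⟩
        rcases Finset.mem_insert.mp ht with rfl | ht
        · exact absurd h2 (lt_irrefl _)
        · exact hab t ht h1 (h2.trans hin.2)
    · refine ⟨a, b, ha, hb, fun t ht h1 h2 => ?_⟩
      rcases Finset.mem_insert.mp ht with rfl | ht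
      · exact hin ⟨h1, h2⟩
      · exact hab t ht h1 h2

omit [IsStrictOrderedRing L] in
theorem exists_interval_no_root {α : L} (hα : α ∉ i.range) {d : ℕ} (hd : RootsBelow i d)
    {h : M[X]} (hdeg : h.natDegree < d) (hne : h.map i ≠ 0)
    {a₀ b₀ : M} (ha₀ : i a₀ < α) (hb₀ : α < i b₀) :
    ∃ a b : M, i a < α ∧ α < i b ∧ ∀ x, i a < x → x < i b → (h.map i).eval x ≠ 0 := by
  classical
  obtain ⟨a, b, ha, hb, hab⟩ := exists_interval_avoiding hα (h.map i).roots.toFinset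
    (fun s hs => hd h hdeg hne s (by simpa [hne] using hs)) ha₀ hb₀
  exact ⟨a, b, ha, hb, fun x h1 h2 h3 => hab x (by simpa [hne] using h3) h1 h2⟩

theorem exists_same_cut (hij : SamePos i j) (hi : Function.Injective i)
    (hL : PolyIVT L) (hT : PolyIVT T) {d : ℕ} (hd : RootsBelow i d) {g : M[X]}
    (hdeg : g.natDegree = d) {α : L} (hg : (g.map i).eval α = 0) {a b : M}
    (ha : i a < α) (hb : α < i b) (hd0 : d ≠ 0)
    (hder : ∀ x, i a < x → x < i b → 0 < ((derivative g).map i).eval x) :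
    ∃ β : T, (g.map j).eval β = 0 ∧ ∀ m, (i m < α → j m < β) ∧ (α < i m → β < j m) := by
  have hmono : ∀ x y, i a ≤ x → x < y → y ≤ i b → (g.map i).eval x < (g.map i).eval y := by
    intro x y h1 h2 h3
    refine hL.eval_lt_eval h2 fun c hc1 hc2 => ?_
    rw [derivative_map]
    exact hder c (h1.trans_lt hc1) (hc2.trans_le h3)
  have hmono' : ∀ x y, j a ≤ x → x < y → y ≤ j b → (g.map j).eval x < (g.map j).eval y := by
    intro x y h1 h2 h3
    refine hT.eval_lt_eval h2 fun c hc1 hc2 => ?_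
    rw [derivative_map]
    exact hij.eval_pos_of_eval_pos hi hL hT hd (derivative g)
      (hdeg ▸ natDegree_derivative_lt (hdeg ▸ hd0)) hder (h1.trans_lt hc1) (hc2.trans_le h3)
  have h1 := (hij.eval_neg_iff g a).mp (hg ▸ hmono _ _ le_rfl ha hb.le)
  have h2 := (hij.eval_pos_iff g b).mp (hg ▸ hmono _ _ ha.le hb le_rfl)
  obtain ⟨β, hβ1, hβ2, hβ⟩ := hT _ _ _ (hij.lt_iff.mp (ha.trans hb)) h1 h2
  refine ⟨β, hβ, fun m => ⟨fun hm => ?_, fun hm => ?_⟩⟩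
  · by_contra! hcon
    have ham : i a < i m := hij.lt_iff.mpr (hβ1.trans_le hcon)
    have h3 := (hij.eval_neg_iff g m).mp (hg ▸ hmono _ _ ham.le hm hb.le)
    rcases hcon.eq_or_lt with rfl | hlt
    · exact h3.ne hβ
    · have := hmono' _ _ hβ1.le hlt (hij.le_iff.mp (hm.trans hb).le)
      linarith
  · by_contra! hcon
    have hmb : i m < i b := hij.lt_iff.mpr (hcon.trans_lt hβ2)
    have h3 := (hij.eval_pos_iff g m).mp (hg ▸ hmono _ _ ha.le hm hmb.le)
    rcases hcon.eq_or_lt with rfl | hlt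
    · exact h3.ne' hβ
    · have := hmono' _ _ (hij.le_iff.mp (ha.trans hm).le) hlt hβ2.le
      linarith

theorem exists_bounds {g : M[X]} (hg : g.Monic) {α : L} (hα : (g.map i).eval α = 0) :
    ∃ a b : M, i a < α ∧ α < i b := by
  set B : M := 1 + ∑ k ∈ Finset.range g.natDegree, (g.coeff k ^ 2 + 1) with hB
  have hBe : i B = 1 + ∑ k ∈ Finset.range g.natDegree, (i (g.coeff k) ^ 2 + 1) := by simp [hB]
  suffices h : |α| < i B by
    rw [abs_lt] at h
    exact ⟨-B, B, by simpa using h.1, h.2⟩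
  by_contra! hcon
  have hsum0 : ∀ n, 0 ≤ ∑ k ∈ Finset.range n, (i (g.coeff k) ^ 2 + 1) :=
    fun n => Finset.sum_nonneg fun k _ => by positivity
  have h1 : 1 ≤ |α| := by linarith [hsum0 g.natDegree]
  have h2 : α ^ g.natDegree = - ∑ k ∈ Finset.range g.natDegree, i (g.coeff k) * α ^ k := by
    rw [eval_map, eval₂_eq_sum_range, Finset.sum_range_succ, hg.coeff_natDegree] at hα
    simp only [map_one, one_mul] at hα
    linear_combination hα
  obtain hd0 | ⟨n, hn⟩ : g.natDegree = 0 ∨ ∃ n, g.natDegree = n + 1 :=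
    (Nat.eq_zero_or_eq_succ_pred _).imp_right fun h => ⟨_, h⟩
  · simp [hd0] at h2
  have h3 : |α| ^ g.natDegree ≤ (∑ k ∈ Finset.range g.natDegree, (i (g.coeff k) ^ 2 + 1)) * |α| ^ n := by
    rw [← abs_pow, h2, abs_neg, Finset.sum_mul]
    refine (Finset.abs_sum_le_sum_abs _ _).trans (Finset.sum_le_sum fun k hk => ?_)
    rw [abs_mul, abs_pow]
    have hk' : k ≤ n := by rw [hn, Finset.mem_range] at hk; omega
    refine mul_le_mul ?_ (pow_le_pow_right₀ h1 hk') (by positivity) (by positivity)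
    rw [abs_le]
    constructor <;> nlinarith [sq_nonneg (i (g.coeff k) - 1), sq_nonneg (i (g.coeff k) + 1)]
  have h4 : 0 < |α| ^ n := by positivity
  rw [hn, pow_succ'] at h3
  have h5 := le_of_mul_le_mul_right h3 h4
  rw [hn] at hBe
  linarith

theorem exists_same_sign (hij : SamePos i j) (hi : Function.Injective i)
    (hL : PolyIVT L) (hT : PolyIVT T) {d : ℕ} (hd : RootsBelow i d) {g : M[X]} (hgm : g.Monic)
    (hdeg : g.natDegree = d) {α : L} (hα : α ∉ i.range) (hg : (g.map i).eval α = 0) :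
    ∃ β : T, ∀ h : M[X], 0 < (h.map i).eval α ↔ 0 < (h.map j).eval β := by
  have hd0 : d ≠ 0 := by
    rintro rfl
    simp [hgm.natDegree_eq_zero.mp hdeg] at hg
  have hg1 : g ≠ 1 := by rintro rfl; simp at hg
  obtain ⟨a₀, b₀, ha₀, hb₀⟩ := exists_bounds hgm hg
  have hder : (derivative g).natDegree < d := hdeg ▸ natDegree_derivative_lt (hdeg ▸ hd0)
  have hne : (derivative g).map i ≠ 0 := by
    rw [← derivative_map]
    intro h0
    have := derivative_eq_zero.mp h0
    rw [natDegree_map_eq_of_injective hi] at this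
    omega
  obtain ⟨a, b, ha, hb, hno⟩ := exists_interval_no_root hα hd hder hne ha₀ hb₀
  obtain ⟨β, hβ, hcut⟩ : ∃ β : T, (g.map j).eval β = 0 ∧
      ∀ m, (i m < α → j m < β) ∧ (α < i m → β < j m) := by
    rcases hL.pos_or_neg_of_no_root hno with hs | hs
    · exact hij.exists_same_cut hi hL hT hd hdeg hg ha hb hd0 hs
    · obtain ⟨β, hβ, hcut⟩ := hij.exists_same_cut hi hL hT hd (g := -g)
        (by rw [natDegree_neg, hdeg]) (by simp [hg]) ha hb hd0
        (fun x h1 h2 => by simpa using hs x h1 h2)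
      exact ⟨β, by simpa using hβ, hcut⟩
  have key : ∀ h : M[X], h.natDegree < d → 0 < (h.map i).eval α → 0 < (h.map j).eval β := by
    intro h hh hpos
    have hne : h.map i ≠ 0 := by intro h0; simp [h0] at hpos
    obtain ⟨a, b, ha, hb, hno⟩ := exists_interval_no_root hα hd hh hne ha₀ hb₀
    rcases hL.pos_or_neg_of_no_root hno with hs | hs
    · exact hij.eval_pos_of_eval_pos hi hL hT hd h hh hs ((hcut a).1 ha) ((hcut b).2 hb)
    · exact absurd hpos (not_lt.mpr (hs α ha hb).le)
  refine ⟨β, fun h => ?_⟩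
  have hmod : (h %ₘ g).natDegree < d := hdeg ▸ natDegree_modByMonic_lt h hgm hg1
  have e1 : (h.map i).eval α = ((h %ₘ g).map i).eval α := by
    conv_lhs => rw [← modByMonic_add_div h g]
    simp [hg]
  have e2 : (h.map j).eval β = ((h %ₘ g).map j).eval β := by
    conv_lhs => rw [← modByMonic_add_div h g]
    simp [hβ]
  rw [e1, e2]
  refine ⟨key _ hmod, fun h2 => ?_⟩
  by_contra! hcon
  rcases hcon.lt_or_eq with hlt | heq
  · have := key (-(h %ₘ g)) (by rwa [natDegree_neg]) (by simpa using hlt)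
    simp only [Polynomial.map_neg, eval_neg] at this
    linarith
  · have h0 : (h %ₘ g).map i = 0 := by
      by_contra hne
      exact hα (hd _ hmod hne _ heq)
    have h0' : h %ₘ g = 0 := (Polynomial.map_eq_zero_iff hi).mp h0
    simp [h0'] at h2

end SamePos

end Transfer

section Maximal

variable {L T : Type*} [Field L] [LinearOrder L] [IsStrictOrderedRing L]
  [Field T] [LinearOrder T] [IsStrictOrderedRing T]

namespace SamePos

/-- The first projection of a subring of a product of fields. -/
def projLeft (G : Subring (L × T)) : G →+* L := (RingHom.fst L T).comp G.subtype

/-- The second projection of a subring of a product of fields. -/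
def projRight (G : Subring (L × T)) : G →+* T := (RingHom.snd L T).comp G.subtype

omit [IsStrictOrderedRing L] [IsStrictOrderedRing T] in
theorem exists_maximal (G₀ : Subring (L × T)) (h₀ : SamePos (projLeft G₀) (projRight G₀)) :
    ∃ G, G₀ ≤ G ∧ Maximal (fun G => SamePos (projLeft G) (projRight G)) G := by
  refine zorn_le_nonempty₀ {G : Subring (L × T) | SamePos (projLeft G) (projRight G)} ?_ G₀ h₀
  intro c hc hchain G hG
  refine ⟨sSup c, ?_, fun z hz => le_sSup hz⟩
  rintro ⟨z, hz⟩
  obtain ⟨H, hH, hzH⟩ := (Subring.mem_sSup_of_directedOn ⟨G, hG⟩ hchain.directedOn).mp hz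
  exact hc hH ⟨z, hzH⟩

omit [IsStrictOrderedRing L] [IsStrictOrderedRing T] in
theorem mem_of_maximal {G : Subring (L × T)}
    (hG : Maximal (fun G => SamePos (projLeft G) (projRight G)) G) {α : L} {β : T}
    (h : ∀ p : G[X], 0 < (p.map (projLeft G)).eval α ↔ 0 < (p.map (projRight G)).eval β) :
    (α, β) ∈ G := by
  let e : G[X] →+* L × T := eval₂RingHom G.subtype (α, β)
  have e1 : ∀ p, (e p).1 = (p.map (projLeft G)).eval α := fun p => by
    rw [eval_map]
    exact hom_eval₂ p G.subtype (RingHom.fst L T) (α, β)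
  have e2 : ∀ p, (e p).2 = (p.map (projRight G)).eval β := fun p => by
    rw [eval_map]
    exact hom_eval₂ p G.subtype (RingHom.snd L T) (α, β)
  have hle : G ≤ e.range := fun z hz => ⟨C ⟨z, hz⟩, by simp [e]⟩
  have hs : SamePos (projLeft e.range) (projRight e.range) := by
    rintro ⟨_, p, rfl⟩
    change 0 < (e p).1 ↔ 0 < (e p).2
    rw [e1, e2, h]
  exact hG.2 hs hle ⟨X, by simp [e]⟩

theorem projLeft_injective {G : Subring (L × T)} (hG : SamePos (projLeft G) (projRight G)) :
    Function.Injective (projLeft G) := by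
  rw [injective_iff_map_eq_zero]
  intro z hz
  have h1 := hG z
  have h2 := hG (-z)
  rw [map_neg, map_neg, neg_pos, neg_pos] at h2
  rw [hz] at h1 h2
  have h3 : projRight G z = 0 :=
    le_antisymm (not_lt.mp fun h => lt_irrefl _ (h1.mpr h))
      (not_lt.mp fun h => lt_irrefl _ (h2.mpr h))
  exact Subtype.ext (Prod.ext hz h3)

theorem eval_inv_pos_iff {G K : Type*} [CommRing G] [Field K] [LinearOrder K]
    [IsStrictOrderedRing K] (f : G →+* K) {z : G} (hf : f z ≠ 0) (p : G[X]) :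
    0 < (p.map f).eval (f z)⁻¹ ↔ 0 < f (p.reverse.eval z * z ^ p.natDegree) := by
  let _ : Invertible (f z)⁻¹ := invertibleOfNonzero (inv_ne_zero hf)
  have h := eval₂_reverse_mul_pow f (f z)⁻¹ p
  rw [invOf_eq_inv, inv_inv, ← eval_map, ← eval_map, eval_map_apply] at h
  rw [← h, map_mul, map_pow, inv_pow, ← div_eq_mul_inv]
  rw [div_pos_iff, mul_pos_iff]

theorem exists_mul_eq_one_of_maximal {G : Subring (L × T)}
    (hG : Maximal (fun G => SamePos (projLeft G) (projRight G)) G) {z : G} (hz : z ≠ 0) :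
    ∃ w, z * w = 1 := by
  have hl : projLeft G z ≠ 0 := fun h => hz ((map_eq_zero_iff _ (projLeft_injective hG.1)).mp h)
  have hr : projRight G z ≠ 0 := by
    intro h
    have h1 := hG.1 z
    have h2 := hG.1 (-z)
    rw [map_neg, map_neg, neg_pos, neg_pos] at h2
    rw [h] at h1 h2
    exact hl (le_antisymm (not_lt.mp fun h => lt_irrefl _ (h1.mp h))
      (not_lt.mp fun h => lt_irrefl _ (h2.mp h)))
  have hmem := mem_of_maximal hG (α := (projLeft G z)⁻¹) (β := (projRight G z)⁻¹) fun p => by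
    rw [eval_inv_pos_iff _ hl, eval_inv_pos_iff _ hr, hG.1]
  exact ⟨⟨_, hmem⟩, Subtype.ext (Prod.ext (mul_inv_cancel₀ hl) (mul_inv_cancel₀ hr))⟩

theorem rootsBelow_of_maximal {G : Subring (L × T)}
    (hG : Maximal (fun G => SamePos (projLeft G) (projRight G)) G)
    (hL : PolyIVT L) (hT : PolyIVT T) (d : ℕ) : RootsBelow (projLeft G) d := by
  have hi := projLeft_injective hG.1
  induction d with
  | zero => intro h hh; simp at hh
  | succ d ih =>
    intro h hh hne α hα
    rcases (Nat.lt_succ_iff.mp hh).lt_or_eq with hlt | heq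
    · exact ih h hlt hne α hα
    by_contra hr
    have hh0 : h ≠ 0 := by rintro rfl; simp at hne
    have : NoZeroDivisors G := hi.noZeroDivisors _ (map_zero _) (map_mul _)
    obtain ⟨w, hw⟩ := exists_mul_eq_one_of_maximal hG (leadingCoeff_ne_zero.mpr hh0)
    have hm : (h * C w).Monic := monic_mul_C_of_leadingCoeff_mul_eq_one hw
    have hw0 : w ≠ 0 := by rintro rfl; exact hh0 (by simpa using (congrArg (C · * h) hw).symm)
    obtain ⟨β, hβ⟩ := hG.1.exists_same_sign hi hL hT ih hm
      (by rw [natDegree_mul_C hw0, heq]) hr (by simp [hα])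
    exact hr ⟨⟨_, mem_of_maximal hG hβ⟩, rfl⟩

theorem exists_eval_pos_iff {A : Type*} [CommRing A] {φ : A →+* L} {ψ : A →+* T}
    (hφψ : SamePos φ ψ) (hL : PolyIVT L) (hT : PolyIVT T) (P : Finset A[X]) (x : L) :
    ∃ y : T, ∀ p ∈ P, 0 < (p.map φ).eval x ↔ 0 < (p.map ψ).eval y := by
  classical
  obtain ⟨G, hG0, hG⟩ := exists_maximal (φ.prod ψ).range (by
    rintro ⟨_, a, rfl⟩
    exact hφψ a)
  let θ : A →+* G := (φ.prod ψ).codRestrict G fun a => hG0 ⟨a, rfl⟩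
  have hθ1 : (projLeft G).comp θ = φ := rfl
  have hθ2 : (projRight G).comp θ = ψ := rfl
  suffices h : ∃ c : G, ∀ p ∈ P, 0 < (p.map φ).eval x ↔ 0 < (p.map φ).eval (projLeft G c) by
    obtain ⟨c, hc⟩ := h
    refine ⟨projRight G c, fun p hp => ?_⟩
    rw [hc p hp, ← hθ1, ← hθ2, ← Polynomial.map_map, ← Polynomial.map_map, hG.1.eval_pos_iff]
  have hroot : ∀ p ∈ P, p.map φ ≠ 0 → ∀ y, (p.map φ).eval y = 0 → ∃ c : G, projLeft G c = y := by
    intro p _ hp y hy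
    have := rootsBelow_of_maximal hG hL hT ((p.map θ).natDegree + 1) (p.map θ)
    rw [Polynomial.map_map, hθ1] at this
    exact this (Nat.lt_succ_self _) hp y hy
  by_cases hx : ∃ c : G, projLeft G c = x
  · obtain ⟨c, rfl⟩ := hx
    exact ⟨c, fun _ _ => Iff.rfl⟩
  set S : Finset L := P.biUnion fun p => (p.map φ).roots.toFinset with hS
  have hmemS : ∀ {y}, y ∈ S ↔ ∃ p ∈ P, p.map φ ≠ 0 ∧ (p.map φ).eval y = 0 := by
    simp [hS]
  have hSG : ∀ y ∈ S, ∃ c : G, projLeft G c = y := fun y hy => by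
    obtain ⟨p, hp, h0, h1⟩ := hmemS.mp hy
    exact hroot p hp h0 y h1
  have hxS : x ∉ S := fun h => hx (hSG x h)
  -- it is enough to find a point with no element of `S` weakly between it and `x`
  suffices h : ∃ c : G, ∀ s ∈ S, (s < x ↔ s < projLeft G c) ∧ (x < s ↔ projLeft G c < s) by
    obtain ⟨c, hc⟩ := h
    refine ⟨c, fun p hp => ?_⟩
    by_cases h0 : p.map φ = 0
    · simp [h0]
    have hr : ∀ s, (p.map φ).eval s = 0 →
        (s < x ↔ s < projLeft G c) ∧ (x < s ↔ projLeft G c < s) :=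
      fun s hs => hc s (hmemS.mpr ⟨p, hp, h0, hs⟩)
    have hxr : (p.map φ).eval x ≠ 0 := fun h => hxS (hmemS.mpr ⟨p, hp, h0, h⟩)
    have hcr : (p.map φ).eval (projLeft G c) ≠ 0 := fun h => by
      have := hr _ h
      rcases lt_trichotomy x (projLeft G c) with h1 | h1 | h1
      · exact absurd (this.2.mp h1) (lt_irrefl _)
      · exact hxr (h1 ▸ h)
      · exact absurd (this.1.mp h1) (lt_irrefl _)
    by_contra hcon
    have hneg : (p.map φ).eval x * (p.map φ).eval (projLeft G c) < 0 := by
      rcases hxr.lt_or_gt with h1 | h1 <;> rcases hcr.lt_or_gt with h2 | h2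
      · exact absurd (iff_of_false h1.not_gt h2.not_gt) hcon
      · exact mul_neg_of_neg_of_pos h1 h2
      · exact mul_neg_of_pos_of_neg h1 h2
      · exact absurd (iff_of_true h1 h2) hcon
    rcases lt_trichotomy x (projLeft G c) with h1 | h1 | h1
    · obtain ⟨s, hs1, hs2, hs⟩ := hL.exists_root h1 hneg
      exact absurd ((hr s hs).2.mp hs1) hs2.not_gt
    · exact absurd (h1 ▸ hneg) (mul_self_nonneg _).not_gt
    · obtain ⟨s, hs1, hs2, hs⟩ := hL.exists_root h1 (by rwa [mul_comm])
      exact absurd ((hr s hs).1.mp hs2) hs1.not_gt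
  have hlo : (∀ s ∈ S, ¬ s < x) ∨ ∃ c : G, projLeft G c < x ∧ ∀ s ∈ S, s < x → s ≤ projLeft G c := by
    refine or_iff_not_imp_left.mpr fun hne => ?_
    push Not at hne
    obtain ⟨s₀, hs₀, hs₀x⟩ := hne
    have hm := (S.filter (· < x)).max'_mem ⟨s₀, by simp [hs₀, hs₀x]⟩
    obtain ⟨c, hc⟩ := hSG _ (Finset.mem_filter.mp hm).1
    exact ⟨c, hc ▸ (Finset.mem_filter.mp hm).2,
      fun s hs hsx => hc ▸ Finset.le_max' _ _ (by simp [hs, hsx])⟩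
  have hhi : (∀ s ∈ S, ¬ x < s) ∨ ∃ c : G, x < projLeft G c ∧ ∀ s ∈ S, x < s → projLeft G c ≤ s := by
    refine or_iff_not_imp_left.mpr fun hne => ?_
    push Not at hne
    obtain ⟨s₀, hs₀, hs₀x⟩ := hne
    have hm := (S.filter (x < ·)).min'_mem ⟨s₀, by simp [hs₀, hs₀x]⟩
    obtain ⟨c, hc⟩ := hSG _ (Finset.mem_filter.mp hm).1
    exact ⟨c, hc ▸ (Finset.mem_filter.mp hm).2,
      fun s hs hsx => hc ▸ Finset.min'_le _ _ (by simp [hs, hsx])⟩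
  suffices h : ∃ c : G, ∀ s ∈ S, (s < x → s < projLeft G c) ∧ (x < s → projLeft G c < s) by
    obtain ⟨c, hc⟩ := h
    refine ⟨c, fun s hs => ?_⟩
    have := hc s hs
    rcases lt_trichotomy s x with h1 | rfl | h1
    · have h2 := this.1 h1
      simp [h1, h2, h1.not_gt, h2.not_gt]
    · exact absurd hs hxS
    · have h2 := this.2 h1
      simp [h1, h2, h1.not_gt, h2.not_gt]
  rcases hlo with hlo | ⟨a, hax, ha⟩ <;> rcases hhi with hhi | ⟨b, hxb, hb⟩
  · exact ⟨0, fun s hs => ⟨fun h => absurd h (hlo s hs), fun h => absurd h (hhi s hs)⟩⟩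
  · refine ⟨b - 1, fun s hs => ⟨fun h => absurd h (hlo s hs), fun h => ?_⟩⟩
    have := hb s hs h
    rw [map_sub, map_one]
    linarith
  · refine ⟨a + 1, fun s hs => ⟨fun h => ?_, fun h => absurd h (hhi s hs)⟩⟩
    have := ha s hs h
    rw [map_add, map_one]
    linarith
  · obtain ⟨w, hw⟩ := exists_mul_eq_one_of_maximal hG (z := 2) fun h => by
      have h2 := congrArg (projLeft G) h
      rw [map_ofNat, map_zero] at h2
      exact two_ne_zero h2
    have hw' := congrArg (projLeft G) hw
    rw [map_mul, map_ofNat, map_one] at hw'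
    have hc : projLeft G ((a + b) * w) = (projLeft G a + projLeft G b) / 2 := by
      rw [map_mul, map_add]
      linear_combination (projLeft G a + projLeft G b) / 2 * hw'
    refine ⟨(a + b) * w, fun s hs => ⟨fun h => ?_, fun h => ?_⟩⟩
    · have := ha s hs h
      rw [hc]
      linarith
    · have := hb s hs h
      rw [hc]
      linarith

end SamePos
end Maximal

section Germ

open Filter

variable {ι : Type*} {U : Ultrafilter ι}

theorem polyIVT_real : PolyIVT ℝ := by
  intro p a b hab ha hb
  obtain ⟨c, hc, h⟩ := intermediate_value_Ioo hab.le p.continuous.continuousOn ⟨ha, hb⟩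
  exact ⟨c, hc.1, hc.2, h⟩

theorem exists_germ_eval (p : (Germ (U : Filter ι) ℝ)[X]) :
    ∃ P : ι → ℝ[X], ∀ a : ι → ℝ,
      p.eval (a : Germ (U : Filter ι) ℝ) = ((fun i => (P i).eval (a i) : ι → ℝ) : Germ _ ℝ) := by
  choose r hr using fun n => Quotient.exists_rep (p.coeff n)
  refine ⟨fun i => ∑ n ∈ Finset.range (p.natDegree + 1), monomial n (r n i), fun a => ?_⟩
  have h : ∀ f : ι → ℝ, (f : Germ (U : Filter ι) ℝ) = Germ.coeRingHom (U : Filter ι) f :=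
    fun _ => rfl
  have h2 : (fun i => (∑ n ∈ Finset.range (p.natDegree + 1), monomial n (r n i)).eval (a i)) =
      ∑ n ∈ Finset.range (p.natDegree + 1), r n * a ^ n := by
    ext i
    simp [eval_finsetSum]
  rw [eval_eq_sum_range, h2, h, h, map_sum]
  refine Finset.sum_congr rfl fun n _ => ?_
  rw [map_mul, map_pow, ← hr n]
  rfl

theorem polyIVT_germ : PolyIVT (Germ (U : Filter ι) ℝ) := by
  intro p a b
  obtain ⟨P, hP⟩ := exists_germ_eval p
  induction a using Germ.inductionOn with | _ a => ?_
  induction b using Germ.inductionOn with | _ b => ?_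
  intro hab ha hb
  rw [hP] at ha hb
  have hab' := Germ.coe_lt.mp hab
  have ha' := Germ.coe_lt.mp ha
  have hb' := Germ.coe_pos.mp hb
  have hex : ∀ i, ∃ c, a i < b i → (P i).eval (a i) < 0 → 0 < (P i).eval (b i) →
      a i < c ∧ c < b i ∧ (P i).eval c = 0 := fun i => by
    by_cases h : a i < b i ∧ (P i).eval (a i) < 0 ∧ 0 < (P i).eval (b i)
    · obtain ⟨c, hc⟩ := polyIVT_real (P i) _ _ h.1 h.2.1 h.2.2
      exact ⟨c, fun _ _ _ => hc⟩
    · exact ⟨0, fun h1 h2 h3 => absurd ⟨h1, h2, h3⟩ h⟩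
  choose c hc using hex
  refine ⟨c, Germ.coe_lt.mpr ?_, Germ.coe_lt.mpr ?_, ?_⟩
  · filter_upwards [hab', ha', hb'] with i h1 h2 h3 using (hc i h1 h2 h3).1
  · filter_upwards [hab', ha', hb'] with i h1 h2 h3 using (hc i h1 h2 h3).2.1
  · rw [hP]
    refine Germ.coe_eq.mpr ?_
    filter_upwards [hab', ha', hb'] with i h1 h2 h3 using (hc i h1 h2 h3).2.2

end Germ

theorem algebraMap_real_pos_iff {L : Type*} [Field L] [LinearOrder L] [IsStrictOrderedRing L]
    [Algebra ℝ L] (c : ℝ) : 0 < algebraMap ℝ L c ↔ 0 < c := by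
  have key : ∀ c : ℝ, 0 ≤ c → 0 ≤ algebraMap ℝ L c := fun c hc => by
    rw [← Real.mul_self_sqrt hc, map_mul]
    exact mul_self_nonneg _
  constructor
  · intro h
    by_contra! hc
    have := key (-c) (by linarith)
    rw [map_neg] at this
    linarith
  · intro h
    refine lt_of_le_of_ne (key c h.le) fun h0 => h.ne ?_
    exact ((map_eq_zero _).mp h0.symm).symm

theorem eval_map_finSuccEquiv {R S : Type*} [CommRing R] [CommRing S] {n : ℕ}
    (φ : MvPolynomial (Fin n) R →+* S) (g : MvPolynomial (Fin (n + 1)) R →+* S) (y : S)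
    (hC : ∀ c, φ (MvPolynomial.C c) = g (MvPolynomial.C c)) (h0 : y = g (MvPolynomial.X 0))
    (hs : ∀ i : Fin n, φ (MvPolynomial.X i) = g (MvPolynomial.X i.succ)) :
    ((evalRingHom y).comp (mapRingHom φ)).comp
      (MvPolynomial.finSuccEquiv R n : MvPolynomial (Fin (n + 1)) R →+* _) = g := by
  refine MvPolynomial.ringHom_ext (fun c => ?_) fun i => ?_
  · simp [MvPolynomial.finSuccEquiv_apply, hC]
  · induction i using Fin.cases with
    | zero => simp [MvPolynomial.finSuccEquiv_X_zero, h0]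
    | succ i => simp [MvPolynomial.finSuccEquiv_X_succ, hs]

/-- A finite system of strict polynomial sign conditions with real coefficients that holds at a
point over an ordered extension field with the intermediate value property holds at a real point. -/
theorem exists_real_point {L : Type*} [Field L] [LinearOrder L] [IsStrictOrderedRing L]
    [Algebra ℝ L] (hL : PolyIVT L) (n : ℕ) (a : Fin n → L)
    (P : Finset (MvPolynomial (Fin n) ℝ)) :
    ∃ x : Fin n → ℝ, ∀ p ∈ P, 0 < MvPolynomial.aeval a p ↔ 0 < MvPolynomial.eval x p := by
  classical
  induction n with
  | zero =>
    refine ⟨Fin.elim0, fun p _ => ?_⟩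
    rw [MvPolynomial.eq_C_of_isEmpty p, MvPolynomial.eval_C, ← MvPolynomial.algebraMap_eq,
      AlgHom.commutes, algebraMap_real_pos_iff]
  | succ n ih =>
    let S : MvPolynomial (Fin n) ℝ → Set (Fin n → ℝ) := fun p =>
      {x | 0 < MvPolynomial.aeval (Fin.tail a) p ↔ 0 < MvPolynomial.eval x p}
    obtain ⟨U, hU⟩ := Ultrafilter.exists_ultrafilter_of_finite_inter_nonempty (Set.range S)
      fun Q hQ => by
        rw [← Set.image_univ] at hQ
        obtain ⟨Q', -, rfl⟩ := Finset.subset_set_image_iff.mp hQ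
        obtain ⟨x, hx⟩ := ih (Fin.tail a) Q'
        refine ⟨x, ?_⟩
        simp only [Finset.coe_image, Set.sInter_image, Set.mem_iInter]
        exact fun p hp => hx p hp
    let ev : MvPolynomial (Fin n) ℝ →+* ((Fin n → ℝ) → ℝ) :=
      RingHom.pi fun x => MvPolynomial.eval x
    let ψ : MvPolynomial (Fin n) ℝ →+* Filter.Germ (U : Filter (Fin n → ℝ)) ℝ :=
      (Filter.Germ.coeRingHom _).comp ev
    let φ : MvPolynomial (Fin n) ℝ →+* L := (MvPolynomial.aeval (Fin.tail a)).toRingHom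
    have hφψ : SamePos φ ψ := fun p => by
      have hp : S p ∈ U := hU ⟨p, rfl⟩
      change _ ↔ 0 < ((ev p : (Fin n → ℝ) → ℝ) : Filter.Germ (U : Filter (Fin n → ℝ)) ℝ)
      rw [Filter.Germ.coe_pos]
      constructor
      · intro h
        filter_upwards [hp] with x hx using hx.mp h
      · intro h
        obtain ⟨x, hx1, hx2⟩ := (h.and hp).exists
        exact hx2.mpr hx1
    obtain ⟨y, hy⟩ := hφψ.exists_eval_pos_iff hL polyIVT_germ
      (P.image (MvPolynomial.finSuccEquiv ℝ n)) (a 0)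
    induction y using Filter.Germ.inductionOn with | _ y => ?_
    have hev : ∀ p ∈ P, ∀ᶠ x in (U : Filter (Fin n → ℝ)), 0 < MvPolynomial.aeval a p ↔
        0 < MvPolynomial.eval (Fin.cons (y x) x : Fin (n + 1) → ℝ) p := by
      intro p hp
      have h := hy _ (Finset.mem_image_of_mem _ hp)
      have h1 : ((MvPolynomial.finSuccEquiv ℝ n p).map φ).eval (a 0) = MvPolynomial.aeval a p := by
        exact congrArg (fun g => g p) (eval_map_finSuccEquiv φ (MvPolynomial.aeval a).toRingHom
          (a 0) (fun c => by simp [φ]) (by simp) fun i => by simp [φ, Fin.tail])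
      have h2 : ((MvPolynomial.finSuccEquiv ℝ n p).map ψ).eval
          (y : Filter.Germ (U : Filter (Fin n → ℝ)) ℝ) =
          ((fun x => MvPolynomial.eval (Fin.cons (y x) x : Fin (n + 1) → ℝ) p :
            (Fin n → ℝ) → ℝ) : Filter.Germ (U : Filter (Fin n → ℝ)) ℝ) := by
        exact congrArg (fun g => g p) (eval_map_finSuccEquiv ψ ((Filter.Germ.coeRingHom _).comp
          (RingHom.pi fun x => MvPolynomial.eval (Fin.cons (y x) x : Fin (n + 1) → ℝ)))
          (y : Filter.Germ (U : Filter (Fin n → ℝ)) ℝ)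
          (fun c => congrArg (Filter.Germ.coeRingHom _)
            (funext fun x => by simp [ev] : ev (MvPolynomial.C c) = _))
          (congrArg (Filter.Germ.coeRingHom _)
            (funext fun x => (MvPolynomial.eval_X (f := Fin.cons (y x) x) 0).symm))
          fun i => congrArg (Filter.Germ.coeRingHom _)
            (funext fun x => by simp [ev] : ev (MvPolynomial.X i) = _))
      rw [h1, h2, Filter.Germ.coe_pos] at h
      by_cases h0 : 0 < MvPolynomial.aeval a p
      · filter_upwards [h.mp h0] with x hx using iff_of_true h0 hx
      · filter_upwards [Ultrafilter.eventually_not.mpr (mt h.mpr h0)] with x hx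
          using iff_of_false h0 hx
    obtain ⟨x, hx⟩ := ((Filter.eventually_all_finset P).mpr hev).exists
    exact ⟨_, hx⟩

theorem IsSumSq.map_ringHom {R S : Type*} [CommRing R] [CommRing S] (g : R →+* S) {a : R}
    (h : IsSumSq a) : IsSumSq (g a) := by
  induction h with
  | zero => simp
  | sq_add b hs ih => rw [map_add, map_mul]; exact ih.sq_add _

theorem IsSumSq.div_of_field {F : Type*} [Field F] {a b : F} (ha : IsSumSq a) (hb : IsSumSq b) :
    IsSumSq (a / b) := by
  by_cases h : b = 0
  · simp [h]
  have : a / b = a * b * (b⁻¹ * b⁻¹) := by field_simp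
  rw [this]
  exact (ha.mul hb).mul (.mul_self _)

theorem IsSumSq.exists_fin {R : Type*} [CommRing R] {a : R} (h : IsSumSq a) :
    ∃ (n : ℕ) (g : Fin n → R), a = ∑ i, g i ^ 2 := by
  induction h with
  | zero => exact ⟨0, 0, by simp⟩
  | sq_add b hs ih =>
    obtain ⟨n, g, rfl⟩ := ih
    exact ⟨n + 1, Fin.cons b g, by simp [Fin.sum_univ_succ, sq]⟩

section SignChange

variable {F : Type*} [Field F] [LinearOrder F] [IsStrictOrderedRing F]

theorem Polynomial.exists_irreducible_factor_sign_change {q : F[X]} {a b : F}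
    (h : q.eval a * q.eval b < 0) :
    ∃ u, Irreducible u ∧ u ∣ q ∧ u.eval a * u.eval b < 0 := by
  induction q using WfDvdMonoid.induction_on_irreducible with
  | zero => simp at h
  | unit q hq =>
    obtain ⟨c, -, rfl⟩ := isUnit_iff.mp hq
    rw [eval_C, eval_C] at h
    exact absurd h (mul_self_nonneg c).not_gt
  | mul q p _ hp ih =>
    by_cases h1 : p.eval a * p.eval b < 0
    · exact ⟨p, hp, dvd_mul_right _ _, h1⟩
    have h2 : q.eval a * q.eval b < 0 := by
      by_contra! h2
      rw [eval_mul, eval_mul, mul_mul_mul_comm] at h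
      exact absurd h (mul_nonneg (not_lt.mp h1) h2).not_gt
    obtain ⟨u, hu, hd, hs⟩ := ih h2
    exact ⟨u, hu, hd.mul_left _, hs⟩

theorem Polynomial.dvd_of_sum_sq_eq_mul {p : F[X]} (hp : Irreducible p) {a b : F}
    (hab : p.eval a * p.eval b < 0)
    (ih : ∀ u : F[X], u.natDegree < p.natDegree → Irreducible u → u.eval a * u.eval b < 0 →
      ∀ (n : ℕ) (g : Fin n → F[X]), u ∣ ∑ i, g i ^ 2 → ∀ i, u ∣ g i)
    (m : ℕ) {q : F[X]} (hm : q.natDegree ≤ m) (hq : q ≠ 0) (hqp : q.natDegree < p.natDegree)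
    {n : ℕ} {r : Fin n → F[X]} (hr : ∑ i, r i ^ 2 = p * q) (i : Fin n) : p ∣ r i := by
  induction m using Nat.strong_induction_on generalizing q r with | _ m ihm => ?_
  have heval : ∀ x, ∑ i, (r i).eval x ^ 2 = p.eval x * q.eval x := fun x => by
    rw [← eval_mul, ← hr, eval_finsetSum]
    simp
  have hnn : ∀ x, 0 ≤ p.eval x * q.eval x := fun x => by
    rw [← heval]
    exact Finset.sum_nonneg fun _ _ => sq_nonneg _
  suffices h : ∃ u : F[X], Irreducible u ∧ u ∣ q ∧ ∀ i, u ∣ r i by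
    obtain ⟨u, hu, ⟨q₁, rfl⟩, hur⟩ := h
    choose r' hr' using hur
    have hup : ¬ u ∣ p := fun h => by
      have h1 := natDegree_le_of_dvd (((hu.dvd_irreducible_iff_associated hp).mp h).symm.dvd)
        hu.ne_zero
      have h2 := natDegree_le_of_dvd (dvd_mul_right u q₁) hq
      omega
    have h1 : u * ∑ i, r' i ^ 2 = p * q₁ := by
      apply mul_left_cancel₀ hu.ne_zero
      rw [← mul_assoc, Finset.mul_sum, mul_left_comm, ← hr]
      exact Finset.sum_congr rfl fun i _ => by rw [hr' i]; ring
    obtain ⟨q₂, rfl⟩ : u ∣ q₁ := (hu.prime.dvd_or_dvd ⟨_, h1.symm⟩).resolve_left hup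
    have h2 : ∑ i, r' i ^ 2 = p * q₂ :=
      mul_left_cancel₀ hu.ne_zero (by rw [h1, mul_left_comm])
    have hq₂ : q₂ ≠ 0 := by rintro rfl; simp at hq
    have hd : (u * (u * q₂)).natDegree = u.natDegree + (u.natDegree + q₂.natDegree) := by
      rw [natDegree_mul hu.ne_zero (mul_ne_zero hu.ne_zero hq₂), natDegree_mul hu.ne_zero hq₂]
    have hu1 := hu.natDegree_pos
    rw [hr' i]
    exact (ihm q₂.natDegree (by omega) le_rfl hq₂ (by omega) h2).mul_left u
  have hroot : ∀ x, p.eval x ≠ 0 → q.eval x = 0 →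
      ∃ u : F[X], Irreducible u ∧ u ∣ q ∧ ∀ i, u ∣ r i := fun x _ hx => by
    refine ⟨X - C x, irreducible_X_sub_C x, dvd_iff_isRoot.mpr hx, fun i => ?_⟩
    have h := heval x
    rw [hx, mul_zero, Finset.sum_eq_zero_iff_of_nonneg fun _ _ => sq_nonneg _] at h
    exact dvd_iff_isRoot.mpr (pow_eq_zero_iff two_ne_zero |>.mp (h i (Finset.mem_univ i)))
  have hpa : p.eval a ≠ 0 := fun h => by simp [h] at hab
  have hpb : p.eval b ≠ 0 := fun h => by simp [h] at hab
  by_cases ha : q.eval a = 0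
  · exact hroot a hpa ha
  by_cases hb : q.eval b = 0
  · exact hroot b hpb hb
  have hqab : q.eval a * q.eval b < 0 := by
    refine lt_of_not_ge fun h => ?_
    have h1 := mul_nonneg (hnn a) (hnn b)
    rw [mul_mul_mul_comm] at h1
    have h2 := mul_neg_of_neg_of_pos hab (lt_of_le_of_ne h (mul_ne_zero ha hb).symm)
    exact absurd h1 h2.not_ge
  obtain ⟨u, hu, hd, hs⟩ := exists_irreducible_factor_sign_change hqab
  exact ⟨u, hu, hd, ih u ((natDegree_le_of_dvd hd hq).trans_lt hqp) hu hs n r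
    (hr ▸ hd.mul_left p)⟩

/-- An irreducible polynomial that changes sign divides a sum of squares only if it divides each
summand. -/
theorem Polynomial.dvd_of_dvd_sum_sq {p : F[X]} (hp : Irreducible p) {a b : F}
    (hab : p.eval a * p.eval b < 0) (n : ℕ) (g : Fin n → F[X]) (h : p ∣ ∑ i, g i ^ 2)
    (i : Fin n) : p ∣ g i := by
  induction hd : p.natDegree using Nat.strong_induction_on generalizing p n with | _ d ih => ?_
  subst hd
  set r : Fin n → F[X] := fun i => g i % p with hr
  have hgr : ∀ i, p ∣ g i - r i := fun i => ⟨g i / p, by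
    exact sub_eq_iff_eq_add'.mpr (EuclideanDomain.mod_add_div (g i) p).symm⟩
  suffices h' : p ∣ r i by simpa using dvd_add (hgr i) h'
  have hpr : p ∣ ∑ i, r i ^ 2 := by
    have : ∑ i, r i ^ 2 = ∑ i, g i ^ 2 - ∑ i, (g i - r i) * (g i + r i) := by
      rw [← Finset.sum_sub_distrib]
      exact Finset.sum_congr rfl fun i _ => by ring
    rw [this]
    exact dvd_sub h (Finset.dvd_sum fun i _ => (hgr i).mul_right _)
  obtain ⟨q, hq⟩ := hpr
  have hdeg : ∀ i, (r i).natDegree < p.natDegree := fun i =>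
    natDegree_mod_lt _ hp.natDegree_pos.ne'
  by_cases hq0 : q = 0
  · rw [hq0, mul_zero] at hq
    have : r i = 0 := Polynomial.funext fun x => by
      have h := congrArg (eval x) hq
      simp only [eval_finsetSum, eval_pow, eval_zero] at h
      rw [Finset.sum_eq_zero_iff_of_nonneg fun _ _ => sq_nonneg _] at h
      simpa using h i (Finset.mem_univ i)
    rw [this]
    exact dvd_zero p
  refine dvd_of_sum_sq_eq_mul hp hab (fun u hu hui hus n g hg i => ih _ hu hui hus n g hg i rfl)
    q.natDegree le_rfl hq0 ?_ hq i
  have h1 : (∑ i, r i ^ 2).natDegree ≤ 2 * (p.natDegree - 1) :=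
    natDegree_sum_le_of_forall_le _ _ fun i _ => by
      refine natDegree_pow_le.trans ?_
      have := hdeg i
      omega
  rw [hq, natDegree_mul hp.ne_zero hq0] at h1
  have := hp.natDegree_pos
  omega

end SignChange

theorem exists_order_of_total {F : Type*} [Field F] (h : ¬ IsSumSq (-1 : F))
    (ht : ∀ a : F, IsSumSq a ∨ IsSumSq (-a)) : ∃ _ : LinearOrder F, IsStrictOrderedRing F := by
  classical
  let C : RingCone F := ⟨Subsemiring.sumSq F, fun {a} h1 h2 => by
    have h1 : IsSumSq a := by simpa using h1
    have h2 : IsSumSq (-a) := by simpa using h2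
    by_contra ha
    apply h
    have := h2.div_of_field h1
    rwa [neg_div, div_self ha] at this⟩
  have hC : HasMemOrNegMem C := ⟨fun a => by simpa [C] using ht a⟩
  let o : LinearOrder F := LinearOrder.mkOfAddGroupCone C
  have : IsOrderedRing F := IsOrderedRing.mkOfCone C
  exact ⟨o, IsOrderedRing.toIsStrictOrderedRing F⟩

section Adjoin

open IntermediateField

variable {F Ω : Type*} [Field F] [Field Ω] [Algebra F Ω]

theorem exists_aeval_of_isSumSq_adjoin {α : Ω} (hα : IsIntegral F α) {y : F⟮α⟯}
    (hy : IsSumSq y) : ∃ (n : ℕ) (g : Fin n → F[X]), (y : Ω) = aeval α (∑ i, g i ^ 2) := by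
  obtain ⟨n, g, rfl⟩ := hy.exists_fin
  have h : ∀ i, ∃ p : F[X], aeval α p = (g i : Ω) := fun i => by
    have h1 : (g i : Ω) ∈ F⟮α⟯.toSubalgebra := (g i).2
    rw [adjoin_simple_toSubalgebra_of_isAlgebraic hα.isAlgebraic,
      Algebra.adjoin_singleton_eq_range_aeval] at h1
    exact h1
  choose p hp using h
  exact ⟨n, p, by simp [hp]⟩

theorem not_isSumSq_neg_one_adjoin_of_sq {s : Ω} {d : F} (hs : s ^ 2 = algebraMap F Ω d)
    (h : ¬ IsSumSq (-1 : F)) (hd : ¬ IsSumSq (-d)) : ¬ IsSumSq (-1 : F⟮s⟯) := by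
  intro hcon
  have hintegral : IsIntegral F s := ⟨X ^ 2 - C d, monic_X_pow_sub_C d two_ne_zero, by simp [hs]⟩
  obtain ⟨n, g, hg⟩ := exists_aeval_of_isSumSq_adjoin hintegral hcon
  have hlin : ∀ i, ∃ u v : F, aeval s (g i) = algebraMap F Ω u + algebraMap F Ω v * s := fun i => by
    have hm : (X ^ 2 - C d : F[X]).Monic := monic_X_pow_sub_C d two_ne_zero
    have hdeg : (g i %ₘ (X ^ 2 - C d)).natDegree ≤ 1 := by
      have := natDegree_modByMonic_lt (g i) hm (fun h => by
        have := congrArg natDegree h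
        simp at this)
      rw [natDegree_X_pow_sub_C] at this
      omega
    obtain ⟨v, u, huv⟩ := exists_eq_X_add_C_of_natDegree_le_one hdeg
    refine ⟨u, v, ?_⟩
    rw [← modByMonic_add_div (g i) (X ^ 2 - C d), huv]
    simp [hs, add_comm]
  choose u v huv using hlin
  have hsum : (-1 : Ω) = algebraMap F Ω (∑ i, u i ^ 2 + d * ∑ i, v i ^ 2) +
      algebraMap F Ω (2 * ∑ i, u i * v i) * s := by
    have h1 : ((-1 : F⟮s⟯) : Ω) = -1 := by simp
    rw [← h1, hg]
    simp only [map_sum, map_pow, huv, map_add, map_mul, map_ofNat, Finset.mul_sum,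
      Finset.sum_mul, ← Finset.sum_add_distrib]
    refine Finset.sum_congr rfl fun i _ => ?_
    linear_combination algebraMap F Ω (v i) ^ 2 * hs
  by_cases hmem : ∃ c, algebraMap F Ω c = s
  · obtain ⟨c, rfl⟩ := hmem
    apply h
    have h2 : -1 = ∑ i, (u i + v i * c) ^ 2 := by
      apply (algebraMap F Ω).injective
      have h1 : ((-1 : F⟮algebraMap F Ω c⟯) : Ω) = -1 := by simp
      rw [map_neg, map_one, ← h1, hg]
      simp [huv]
    rw [h2]
    exact .sum_sq _ _
  have h0 : 2 * ∑ i, u i * v i = 0 := by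
    by_contra h0
    refine hmem ⟨(-1 - (∑ i, u i ^ 2 + d * ∑ i, v i ^ 2)) / (2 * ∑ i, u i * v i), ?_⟩
    rw [map_div₀, div_eq_iff ((_root_.map_ne_zero _).mpr h0), map_sub, map_neg, map_one]
    linear_combination hsum
  rw [h0, map_zero, zero_mul, add_zero, ← map_one (algebraMap F Ω), ← map_neg] at hsum
  have h2 := (algebraMap F Ω).injective hsum
  by_cases hv : ∑ i, v i ^ 2 = 0
  · rw [hv, mul_zero, add_zero] at h2
    exact h (h2 ▸ .sum_sq _ _)
  apply hd
  have h3 : -d = (1 + ∑ i, u i ^ 2) / ∑ i, v i ^ 2 := by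
    rw [eq_div_iff hv]
    linear_combination h2
  rw [h3]
  exact (IsSumSq.one.add (.sum_sq _ _)).div_of_field (.sum_sq _ _)

theorem not_isSumSq_neg_one_adjoin_of_sign_change [LinearOrder F] [IsStrictOrderedRing F] {α : Ω}
    {p : F[X]} (hp : Irreducible p) (hα : aeval α p = 0) {a b : F}
    (hab : p.eval a * p.eval b < 0) : ¬ IsSumSq (-1 : F⟮α⟯) := by
  intro hcon
  have hintegral : IsIntegral F α := isAlgebraic_iff_isIntegral.mp ⟨p, hp.ne_zero, hα⟩
  obtain ⟨n, g, hg⟩ := exists_aeval_of_isSumSq_adjoin hintegral hcon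
  have hg1 : aeval α (∑ i, (Fin.cons 1 g : Fin (n + 1) → F[X]) i ^ 2) = 0 := by
    rw [Fin.sum_univ_succ, map_add]
    simp only [Fin.cons_zero, Fin.cons_succ]
    rw [← hg]
    simp
  have hdvd : p ∣ ∑ i, (Fin.cons 1 g : Fin (n + 1) → F[X]) i ^ 2 := by
    by_contra h
    obtain ⟨u, v, huv⟩ := (hp.coprime_iff_not_dvd).mpr h
    have := congrArg (aeval α) huv
    rw [map_add, map_mul, map_mul, hα, hg1] at this
    simp at this
  exact hp.not_isUnit (isUnit_of_dvd_one (dvd_of_dvd_sum_sq hp hab _ _ hdvd 0))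

variable [IsAlgClosed Ω]

theorem exists_order_of_maximal_real (h : ¬ IsSumSq (-1 : F))
    (hmax : ∀ α : Ω, ¬ IsSumSq (-1 : F⟮α⟯) → ∃ c, algebraMap F Ω c = α) :
    ∃ _ : LinearOrder F, IsStrictOrderedRing F := by
  refine exists_order_of_total h fun a => ?_
  by_contra! hcon
  obtain ⟨s, hs⟩ := IsAlgClosed.exists_pow_nat_eq (algebraMap F Ω a) two_pos
  obtain ⟨c, rfl⟩ := hmax s (not_isSumSq_neg_one_adjoin_of_sq hs h hcon.2)
  rw [← map_pow] at hs
  refine hcon.1 ?_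
  rw [← (algebraMap F Ω).injective hs, sq]
  exact .mul_self c

theorem polyIVT_of_maximal_real [LinearOrder F] [IsStrictOrderedRing F]
    (hmax : ∀ α : Ω, ¬ IsSumSq (-1 : F⟮α⟯) → ∃ c, algebraMap F Ω c = α) : PolyIVT F := by
  intro q a b hab ha hb
  obtain ⟨p, hp, hpq, hs⟩ := exists_irreducible_factor_sign_change (mul_neg_of_neg_of_pos ha hb)
  obtain ⟨α, hα⟩ := IsAlgClosed.exists_aeval_eq_zero Ω p hp.degree_pos.ne'
  obtain ⟨c, rfl⟩ := hmax α (not_isSumSq_neg_one_adjoin_of_sign_change hp hα hs)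
  rw [aeval_algebraMap_apply, map_eq_zero, coe_aeval_eq_eval] at hα
  obtain ⟨m, hm⟩ := dvd_iff_isRoot.mpr hα
  have hu : IsUnit m := (hp.isUnit_or_isUnit hm).resolve_left (not_isUnit_X_sub_C c)
  obtain ⟨k, -, rfl⟩ := isUnit_iff.mp hu
  have hq : q.eval c = 0 := eval_eq_zero_of_dvd_of_eval_eq_zero hpq hα
  rw [hm] at hs
  simp only [eval_mul, eval_sub, eval_X, eval_C] at hs
  have h2 : (a - c) * (b - c) < 0 := by
    by_contra! h2
    nlinarith [mul_nonneg h2 (sq_nonneg k)]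
  rcases mul_neg_iff.mp h2 with h | h
  · linarith
  · exact ⟨c, by linarith, by linarith, hq⟩

end Adjoin

section Maximal

open IntermediateField

variable {K Ω : Type*} [Field K] [Field Ω] [Algebra K Ω]

theorem exists_maximal_real (E : IntermediateField K Ω) (hE : ¬ IsSumSq (-1 : E)) :
    ∃ M, E ≤ M ∧ Maximal (fun M : IntermediateField K Ω => ¬ IsSumSq (-1 : M)) M := by
  refine zorn_le_nonempty₀ {M : IntermediateField K Ω | ¬ IsSumSq (-1 : M)} ?_ E hE
  intro c hc hchain G hG
  refine ⟨sSup c, ?_, fun z hz => le_sSup hz⟩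
  have : Nonempty c := ⟨⟨G, hG⟩⟩
  have hmem : ∀ x ∈ sSup c, ∃ H ∈ c, x ∈ H := fun x hx => by
    rw [sSup_eq_iSup', ← SetLike.mem_coe, coe_iSup_of_directed hchain.directed] at hx
    obtain ⟨H, hH⟩ := Set.mem_iUnion.mp hx
    exact ⟨H, H.2, hH⟩
  have key : ∀ y : (sSup c : IntermediateField K Ω), IsSumSq y →
      ∃ H ∈ c, ∃ z : H, IsSumSq z ∧ (z : Ω) = y := by
    intro y hy
    induction hy with
    | zero => exact ⟨G, hG, 0, .zero, by simp⟩
    | sq_add a hs ih =>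
      obtain ⟨H, hH, z, hz, hzs⟩ := ih
      obtain ⟨H', hH', ha⟩ := hmem a a.2
      obtain ⟨N, hN, hHN, hHN'⟩ := hchain.directedOn H hH H' hH'
      refine ⟨N, hN, ⟨a, hHN' ha⟩ * ⟨a, hHN' ha⟩ + inclusion hHN z,
        (hz.map_ringHom (inclusion hHN).toRingHom).sq_add _, ?_⟩
      simp [hzs]
  intro hcon
  obtain ⟨H, hH, z, hz, hz1⟩ := key _ hcon
  refine hc hH ?_
  have : z = -1 := Subtype.ext (by simpa using hz1)
  exact this ▸ hz

theorem exists_of_maximal_real {M : IntermediateField K Ω}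
    (hM : Maximal (fun M : IntermediateField K Ω => ¬ IsSumSq (-1 : M)) M) (α : Ω)
    (hα : ¬ IsSumSq (-1 : M⟮α⟯)) : ∃ c, algebraMap M Ω c = α := by
  have hle : M ≤ M⟮α⟯.restrictScalars K := fun x hx => M⟮α⟯.algebraMap_mem ⟨x, hx⟩
  exact ⟨⟨α, hM.2 hα hle (mem_adjoin_simple_self M α)⟩, rfl⟩

end Maximal

/-- An element of a field of characteristic zero that is not a sum of squares is negative in some
ordered extension field with the intermediate value property. -/
theorem exists_polyIVT_map_neg.{u} {K : Type u} [Field K] [CharZero K] {f : K} (hf : ¬ IsSumSq f) :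
    ∃ (L : Type u) (_ : Field L) (_ : LinearOrder L) (_ : IsStrictOrderedRing L) (φ : K →+* L),
      PolyIVT L ∧ φ f < 0 := by
  have hf0 : f ≠ 0 := by rintro rfl; exact hf .zero
  have hK : ¬ IsSumSq (-1 : K) := fun h => hf (by
    have : f = (f + 1) / 2 * ((f + 1) / 2) + -1 * ((f - 1) / 2 * ((f - 1) / 2)) := by ring
    rw [this]
    exact (h.mul (.mul_self _)).sq_add _)
  obtain ⟨s, hs⟩ := IsAlgClosed.exists_pow_nat_eq (algebraMap K (AlgebraicClosure K) (-f)) two_pos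
  obtain ⟨M, hsM, hM⟩ := exists_maximal_real _
    (not_isSumSq_neg_one_adjoin_of_sq hs hK (by rwa [neg_neg]))
  have hmax := exists_of_maximal_real hM
  obtain ⟨o, ho⟩ := exists_order_of_maximal_real hM.1 hmax
  refine ⟨M, inferInstance, o, ho, algebraMap K M, polyIVT_of_maximal_real hmax, ?_⟩
  have hs' : (⟨s, hsM (IntermediateField.mem_adjoin_simple_self K s)⟩ : M) ^ 2 =
      algebraMap K M (-f) := Subtype.ext hs
  have h1 : algebraMap K M f ≠ 0 := (_root_.map_ne_zero _).mpr hf0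
  rw [map_neg] at hs'
  refine lt_of_le_of_ne ?_ h1
  rw [← neg_nonneg, ← hs']
  exact sq_nonneg _

/-- A polynomial that is nonnegative on real space is a sum of squares of rational functions. -/
theorem isSumSq_algebraMap_of_nonneg {n : ℕ} (K : Type*) [Field K]
    [Algebra (MvPolynomial (Fin n) ℝ) K] [IsFractionRing (MvPolynomial (Fin n) ℝ) K]
    (f : MvPolynomial (Fin n) ℝ) (hf : ∀ x : Fin n → ℝ, 0 ≤ MvPolynomial.eval x f) :
    IsSumSq (algebraMap (MvPolynomial (Fin n) ℝ) K f) := by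
  classical
  by_contra hcon
  have : CharZero K := charZero_of_injective_algebraMap
    (IsFractionRing.injective (MvPolynomial (Fin n) ℝ) K)
  obtain ⟨L, _, _, _, φ, hL, hneg⟩ := exists_polyIVT_map_neg hcon
  let θ : MvPolynomial (Fin n) ℝ →+* L := φ.comp (algebraMap (MvPolynomial (Fin n) ℝ) K)
  let _ : Algebra ℝ L := (θ.comp MvPolynomial.C).toAlgebra
  obtain ⟨x, hx⟩ := exists_real_point hL n (fun i => θ (MvPolynomial.X i)) {-f}
  have hθ : (MvPolynomial.aeval fun i => θ (MvPolynomial.X i) :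
      MvPolynomial (Fin n) ℝ →ₐ[ℝ] L).toRingHom = θ :=
    MvPolynomial.ringHom_ext (fun c => by simp; rfl) fun i => by simp
  have h1 := hx (-f) (Finset.mem_singleton_self _)
  have h2 : (MvPolynomial.aeval fun i => θ (MvPolynomial.X i)) f = φ (algebraMap _ K f) :=
    congrArg (fun g => g f) hθ
  rw [map_neg, map_neg, h2, neg_pos, neg_pos] at h1
  exact absurd (h1.mp hneg) (hf x).not_gt

end HilbertSeventeenth

section Descent

variable {R : Type*} [CommRing R] [IsDomain R] [UniqueFactorizationMonoid R]

theorem exists_sum_sq_eq_mul_sq_of_prime {f p : R} (hf : Squarefree f) (hp : Prime p)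
    (hpf : p ∣ f) {n : ℕ} {g : Fin n → R} {h : R} (h0 : h ≠ 0)
    (hg : ∑ i, g i ^ 2 = f * h ^ 2) :
    ∃ g' : Fin n → R, f ∣ ∑ i, g' i ^ 2 ∧ ∃ i, ¬ p ∣ g' i := by
  obtain ⟨k, h', hh', rfl⟩ := WfDvdMonoid.max_power_factor h0 hp.irreducible
  obtain ⟨f', rfl⟩ := hpf
  have hf' : ¬ p ∣ f' := fun ⟨c, hc⟩ => hp.not_isUnit (hf p ⟨c, by rw [hc, mul_assoc]⟩)
  induction k generalizing g with
  | zero =>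
    refine ⟨g, ⟨_, hg⟩, ?_⟩
    by_contra! hall
    choose g₁ hg₁ using hall
    have h1 : p * ∑ i, g₁ i ^ 2 = f' * h' ^ 2 := by
      apply mul_left_cancel₀ hp.ne_zero
      rw [← mul_assoc p f', ← one_mul h', ← pow_zero p, ← hg, Finset.mul_sum, Finset.mul_sum]
      exact Finset.sum_congr rfl fun i _ => by rw [hg₁ i]; ring
    exact ((hp.dvd_or_dvd ⟨_, h1.symm⟩).resolve_left hf').elim
      fun c hc => hh' (hp.dvd_of_dvd_pow ⟨c, hc⟩)
  | succ k ih =>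
    by_cases hall : ∀ i, p ∣ g i
    · choose g₁ hg₁ using hall
      refine ih (g := g₁) (mul_ne_zero (pow_ne_zero _ hp.ne_zero) fun h => hh' (by simp [h])) ?_
      apply mul_left_cancel₀ (pow_ne_zero 2 hp.ne_zero)
      have : p ^ 2 * ∑ i, g₁ i ^ 2 = ∑ i, g i ^ 2 := by
        rw [Finset.mul_sum]
        exact Finset.sum_congr rfl fun i _ => by rw [hg₁ i]; ring
      rw [this, hg]
      ring
    · push Not at hall
      exact ⟨g, ⟨_, hg⟩, hall⟩

omit [UniqueFactorizationMonoid R] in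
theorem exists_sum_sq_eq_mul_sq (K : Type*) [Field K] [Algebra R K] [IsFractionRing R K] {f : R}
    (hf : IsSumSq (algebraMap R K f)) :
    ∃ (n : ℕ) (g : Fin n → R) (h : R), h ≠ 0 ∧ ∑ i, g i ^ 2 = f * h ^ 2 := by
  obtain ⟨n, q, hq⟩ := hf.exists_fin
  obtain ⟨b, hb⟩ := IsLocalization.exist_integer_multiples_of_finite (nonZeroDivisors R) q
  choose g hg using hb
  refine ⟨n, g, b, nonZeroDivisors.ne_zero b.2, IsFractionRing.injective R K ?_⟩
  rw [map_sum, map_mul, hq, Finset.sum_mul]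
  refine Finset.sum_congr rfl fun i _ => ?_
  rw [map_pow, hg, Algebra.smul_def, map_pow]
  ring

omit [IsDomain R] in
theorem Ideal.IsPrime.exists_prime_dvd_of_mem {Q : Ideal R} (hQ : Q.IsPrime) {f : R}
    (hf0 : f ≠ 0) (hf : f ∈ Q) : ∃ p ∈ Q, Prime p ∧ p ∣ f := by
  induction f using WfDvdMonoid.induction_on_irreducible with
  | zero => exact absurd rfl hf0
  | unit u hu => exact absurd (Ideal.eq_top_of_isUnit_mem _ hf hu) hQ.ne_top
  | mul a i ha hi ih =>
    rcases hQ.mem_or_mem hf with h | h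
    · exact ⟨i, h, hi.prime, dvd_mul_right _ _⟩
    · obtain ⟨p, hpQ, hp, hd⟩ := ih ha h
      exact ⟨p, hpQ, hp, hd.mul_left _⟩

end Descent

/-- The dimension drops by at least two in a quotient of a factorial domain in which all primes
strictly contain a nonzero principal prime. -/
theorem ringKrullDim_add_two_le {R B : Type*} [CommRing R] [IsDomain R] [CommRing B]
    {π : R →+* B} (hπ : Function.Surjective π)
    (h : ∀ Q : Ideal R, Q.IsPrime → RingHom.ker π ≤ Q → ∃ p ∈ Q, Prime p ∧ ∃ x ∈ Q, ¬ p ∣ x)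
    (l : LTSeries (PrimeSpectrum B)) : ∃ l' : LTSeries (PrimeSpectrum R), l'.length = l.length + 2 := by
  have hmono : StrictMono (PrimeSpectrum.comap π) :=
    (Monotone.strictMono_of_injective (fun _ _ h => Ideal.comap_mono h)
      (PrimeSpectrum.comap_injective_of_surjective π hπ))
  let l₀ : LTSeries (PrimeSpectrum R) := l.map _ hmono
  obtain ⟨p, hpQ, hp, x, hx, hpx⟩ := h l₀.head.asIdeal l₀.head.2
    (Ideal.comap_mono (f := π) bot_le)
  let P : PrimeSpectrum R := ⟨Ideal.span {p}, (Ideal.span_singleton_prime hp.ne_zero).mpr hp⟩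
  have h1 : P < l₀.head := by
    refine lt_of_le_of_ne ((Ideal.span_singleton_le_iff_mem _).mpr hpQ) fun heq => hpx ?_
    rw [← heq] at hx
    exact Ideal.mem_span_singleton.mp hx
  have h2 : (⊥ : PrimeSpectrum R) < P := by
    refine lt_of_le_of_ne bot_le fun heq => hp.ne_zero ?_
    have : p ∈ (⊥ : PrimeSpectrum R).asIdeal := heq ▸ Ideal.mem_span_singleton_self p
    exact this
  refine ⟨RelSeries.cons (RelSeries.cons l₀ P h1) ⊥ h2, ?_⟩
  exact (RelSeries.cons_length _ _ _).trans (congrArg (· + 1) (RelSeries.cons_length _ _ _))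

theorem ringKrullDim_le_of_injective_isIntegral {A B : Type*} [CommRing A] [CommRing B]
    {g : A →+* B} (hg : g.IsIntegral) (hinj : Function.Injective g) :
    ringKrullDim A ≤ ringKrullDim B := by
  algebraize [g]
  refine iSup_le fun l => ?_
  obtain ⟨P, hP⟩ := hg.comap_surjective hinj l.head
  have : P.asIdeal.LiesOver l.head.asIdeal := ⟨congrArg PrimeSpectrum.asIdeal hP.symm⟩
  obtain ⟨L, hL, -⟩ := Ideal.exists_ltSeries_of_hasGoingUp l P.asIdeal
  rw [← hL]
  exact Order.LTSeries.length_le_krullDim L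

theorem exists_surjective_polynomial_ringHom {k : Type*} [CommRing k] {s : ℕ} (hs : s ≤ 1) :
    ∃ e : Polynomial k →+* MvPolynomial (Fin s) k, Function.Surjective e := by
  obtain rfl | rfl : s = 0 ∨ s = 1 := by omega
  · refine ⟨Polynomial.eval₂RingHom MvPolynomial.C 0, fun p => ⟨Polynomial.C (p.coeff 0), ?_⟩⟩
    conv_rhs => rw [MvPolynomial.eq_C_of_isEmpty p]
    simp
  · exact ⟨(MvPolynomial.uniqueAlgEquiv k (Fin 1)).symm.toRingEquiv.toRingHom,
      (MvPolynomial.uniqueAlgEquiv k (Fin 1)).symm.surjective⟩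

theorem MvPolynomial.finite_comp_polynomial {k B : Type*} [Field k] [CommRing B] [Algebra k B]
    {s : ℕ} (hs : s ≤ 1) {g : MvPolynomial (Fin s) k →ₐ[k] B} (hg : g.Finite) :
    ∃ φ : Polynomial k →+* B, φ.Finite := by
  obtain ⟨e, he⟩ := exists_surjective_polynomial_ringHom (k := k) hs
  have hg : g.toRingHom.Finite := hg
  exact ⟨_, hg.comp (RingHom.Finite.of_surjective e he)⟩

theorem exists_finite_ringHom_polynomial_of_length_le {k B : Type*} [Field k] [CommRing B]
    [Algebra k B] [Algebra.FiniteType k B]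
    (hdim : ∀ l : LTSeries (PrimeSpectrum B), l.length ≤ 1) :
    ∃ φ : Polynomial k →+* B, φ.Finite := by
  rcases subsingleton_or_nontrivial B with hB | hB
  · exact ⟨(Polynomial.aeval (0 : B)).toRingHom,
      RingHom.Finite.of_surjective _ fun b => ⟨0, Subsingleton.elim _ _⟩⟩
  obtain ⟨s, g, hinj, hfin⟩ := exists_finite_inj_algHom_of_fg k B
  have hle : ringKrullDim B ≤ 1 := iSup_le fun l => by exact_mod_cast hdim l
  have h1 : ringKrullDim (MvPolynomial (Fin s) k) ≤ 1 :=
    (ringKrullDim_le_of_injective_isIntegral (g := g.toRingHom) hfin.to_isIntegral hinj).trans hle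
  rw [MvPolynomial.ringKrullDim_of_isNoetherianRing, ringKrullDim_eq_zero_of_field,
    Nat.card_eq_fintype_card, Fintype.card_fin, zero_add] at h1
  exact MvPolynomial.finite_comp_polynomial (by exact_mod_cast h1) hfin

theorem primeSpectrum_length_le_one {B : Type*} [CommRing B]
    {f : MvPolynomial (Fin 3) ℝ} (hsf : Squarefree f)
    (hf : IsSumSq (algebraMap _ (FractionRing (MvPolynomial (Fin 3) ℝ)) f))
    {π : MvPolynomial (Fin 3) ℝ →+* B} (hπ : Function.Surjective π) (hπf : π f = 0)
    (hnil : ∀ (n : ℕ) (g : Fin n → MvPolynomial (Fin 3) ℝ), f ∣ ∑ i, g i ^ 2 →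
      ∀ i, IsNilpotent (π (g i))) (l : LTSeries (PrimeSpectrum B)) : l.length ≤ 1 := by
  obtain ⟨n, g, h, h0, hg⟩ := exists_sum_sq_eq_mul_sq _ hf
  obtain ⟨l', hl'⟩ := ringKrullDim_add_two_le hπ (fun Q hQ hker => by
    obtain ⟨p, hpQ, hp, hpf⟩ := hQ.exists_prime_dvd_of_mem hsf.ne_zero (hker hπf)
    refine ⟨p, hpQ, hp, ?_⟩
    obtain ⟨g', hg', i, hi⟩ := exists_sum_sq_eq_mul_sq_of_prime hsf hp hpf h0 hg
    refine ⟨g' i, ?_, hi⟩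
    obtain ⟨m, hm⟩ := hnil n g' hg' i
    exact hQ.mem_of_pow_mem m (hker (by rw [RingHom.mem_ker, map_pow]; exact hm))) l
  have h3 : (l'.length : WithBot ℕ∞) ≤ ringKrullDim (MvPolynomial (Fin 3) ℝ) :=
    Order.LTSeries.length_le_krullDim l'
  rw [MvPolynomial.ringKrullDim_of_isNoetherianRing, hl'] at h3
  simp only [ringKrullDim_eq_zero_of_field, Nat.card_eq_fintype_card, Fintype.card_fin,
    zero_add] at h3
  have : l.length + 2 ≤ 3 := by exact_mod_cast h3
  omega

section Reduction

variable {A : Type*} [CommRing A]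

theorem exists_sum_sq_add {m n : ℕ} {a b : A} (ha : ∃ g : Fin m → A, a = ∑ i, g i ^ 2)
    (hb : ∃ g : Fin n → A, b = ∑ i, g i ^ 2) : ∃ g : Fin (m + n) → A, a + b = ∑ i, g i ^ 2 := by
  obtain ⟨g, rfl⟩ := ha
  obtain ⟨h, rfl⟩ := hb
  exact ⟨Fin.append g h, by simp [Fin.sum_univ_add]⟩

/-- The ideal generated by the squares whose negatives are sums of squares. -/
def realSquaresIdeal (A : Type*) [CommRing A] : Ideal A :=
  Ideal.span {y | ∃ x : A, y = x ^ 2 ∧ IsSumSq (-y)}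

theorem exists_bound_of_mem_span (s : Finset A)
    (hs : ∀ y ∈ s, ∃ n : ℕ, ∀ a : A, ∃ g : Fin n → A, a * y = ∑ i, g i ^ 2) :
    ∃ n : ℕ, ∀ b ∈ Ideal.span (s : Set A), ∃ g : Fin n → A, b = ∑ i, g i ^ 2 := by
  classical
  induction s using Finset.induction_on with
  | empty => exact ⟨0, fun b hb => ⟨0, by simpa using hb⟩⟩
  | insert y s _ ih =>
    obtain ⟨m, hm⟩ := hs y (Finset.mem_insert_self _ _)
    obtain ⟨n, hn⟩ := ih fun z hz => hs z (Finset.mem_insert_of_mem hz)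
    refine ⟨m + n, fun b hb => ?_⟩
    rw [Finset.coe_insert, Ideal.mem_span_insert] at hb
    obtain ⟨a, z, hz, rfl⟩ := hb
    exact exists_sum_sq_add (hm a) (hn z hz)

theorem exists_bound_mul_sq {c : A} (hc : 2 * c = 1) {x : A} (hx : IsSumSq (-x ^ 2)) :
    ∃ n : ℕ, ∀ a : A, ∃ g : Fin n → A, a * x ^ 2 = ∑ i, g i ^ 2 := by
  obtain ⟨n, u, hu⟩ := hx.exists_fin
  refine ⟨1 + n, fun a => ?_⟩
  have h : a * x ^ 2 = ((a + 1) * c * x) ^ 2 + ((a - 1) * c) ^ 2 * (-x ^ 2) := by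
    linear_combination (-a * x ^ 2 * (2 * c + 1)) * hc
  rw [h]
  refine exists_sum_sq_add ⟨fun _ => (a + 1) * c * x, by simp⟩
    ⟨fun i => (a - 1) * c * u i, ?_⟩
  rw [hu, Finset.mul_sum]
  exact Finset.sum_congr rfl fun i _ => (mul_pow _ _ _).symm

theorem exists_bound_of_quotient [IsNoetherianRing A] {c : A} (hc : 2 * c = 1)
    (h : ∃ n : ℕ, ∀ b : A ⧸ realSquaresIdeal A, IsSumSq b → ∃ g : Fin n → A ⧸ realSquaresIdeal A,
      b = ∑ i, g i ^ 2) :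
    ∃ n : ℕ, ∀ b : A, IsSumSq b → ∃ g : Fin n → A, b = ∑ i, g i ^ 2 := by
  obtain ⟨s, hs, hspan⟩ := Submodule.fg_span_iff_fg_span_finset_subset
    {y | ∃ x : A, y = x ^ 2 ∧ IsSumSq (-y)} |>.mp (IsNoetherian.noetherian (realSquaresIdeal A))
  obtain ⟨m, hm⟩ := exists_bound_of_mem_span s fun y hy => by
    obtain ⟨x, rfl, hx⟩ := hs hy
    exact exists_bound_mul_sq hc hx
  obtain ⟨n, hn⟩ := h
  refine ⟨n + m, fun b hb => ?_⟩
  obtain ⟨g, hg⟩ := hn _ (hb.map_ringHom (Ideal.Quotient.mk (realSquaresIdeal A)))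
  choose g' hg' using fun i => Ideal.Quotient.mk_surjective (g i)
  have hmem : b - ∑ i, g' i ^ 2 ∈ realSquaresIdeal A := by
    rw [← Ideal.Quotient.eq_zero_iff_mem, map_sub, hg, map_sum, sub_eq_zero]
    exact Finset.sum_congr rfl fun i _ => by rw [map_pow, hg']
  have := exists_sum_sq_add ⟨g', rfl⟩ (hm _ (hspan.le hmem))
  rwa [add_sub_cancel] at this

theorem sq_mem_realSquaresIdeal {n : ℕ} {g : Fin n → A} (hg : ∑ i, g i ^ 2 = 0) (i : Fin n) :
    g i ^ 2 ∈ realSquaresIdeal A := by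
  refine Ideal.subset_span ⟨g i, rfl, ?_⟩
  have : -g i ^ 2 = ∑ j ∈ Finset.univ.erase i, g j ^ 2 := by
    rw [← Finset.add_sum_erase _ _ (Finset.mem_univ i)] at hg
    linear_combination -hg
  rw [this]
  exact IsSumSq.sum fun j _ => (IsSquare.sq (g j)).isSumSq

end Reduction

section Denominators

variable {R : Type*} [CommRing R] [IsDomain R] {σ : R →+* R}

/-- Over a domain with involution in which every hermitian sum of squares is a hermitian square,
a hermitian sum of squares of vectors of length `m` is, up to a denominator, a sum of `m` such
squares. -/
theorem exists_denominator_sum_hermitian_squares (hσ : ∀ x, σ (σ x) = x)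
    (hsq : ∀ {n : ℕ} (a : Fin n → R), ∃ c, ∑ i, a i * σ (a i) = c * σ c)
    (hzero : ∀ {n : ℕ} (a : Fin n → R), ∑ i, a i * σ (a i) = 0 → ∀ i, a i = 0)
    {m n : ℕ} (V : Fin m → Fin n → R) :
    ∃ (q : R) (W : Fin m → Fin m → R), q ≠ 0 ∧
      ∀ k l, q * σ q * ∑ i, V k i * σ (V l i) = ∑ j, W k j * σ (W l j) := by
  induction m with
  | zero => exact ⟨1, 0, one_ne_zero, fun k => k.elim0⟩
  | succ m ih =>
    have key : ∀ V' : Fin (m + 1) → Fin n → R, V' 0 = 0 → ∃ (q : R) (Z : Fin (m + 1) → Fin m → R),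
        q ≠ 0 ∧ ∀ k l, q * σ q * ∑ i, V' k i * σ (V' l i) = ∑ j, Z k j * σ (Z l j) := by
      intro V' hV'
      obtain ⟨q, W, hq, hW⟩ := ih fun k => V' k.succ
      refine ⟨q, Fin.cons 0 W, hq, fun k l => ?_⟩
      cases k using Fin.cases with
      | zero => simp [hV']
      | succ k =>
        cases l using Fin.cases with
        | zero => simp [hV']
        | succ l => simpa using hW k l
    obtain ⟨c, hc⟩ := hsq (V 0)
    by_cases h0 : c = 0
    · obtain ⟨q, Z, hq, hZ⟩ := key V <| funext <| hzero (V 0) (by rw [hc, h0, zero_mul])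
      exact ⟨q, fun k => Fin.cons 0 (Z k), hq, fun k l => by rw [hZ, Fin.sum_univ_succ]; simp⟩
    · let w : Fin (m + 1) → R := fun k => ∑ i, V k i * σ (V 0 i)
      have hw : ∀ l, σ (w l) = ∑ i, V 0 i * σ (V l i) := fun l => by
        simp only [w, map_sum, map_mul, hσ, mul_comm]
      have hG : ∀ k l, ∑ i, (c * σ c * V k i - w k * V 0 i) * σ (c * σ c * V l i - w l * V 0 i) =
          (c * σ c) ^ 2 * ∑ i, V k i * σ (V l i) - c * σ c * (w k * σ (w l)) := by
        intro k l
        have h1 : ∀ i, (c * σ c * V k i - w k * V 0 i) * σ (c * σ c * V l i - w l * V 0 i) =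
            (c * σ c) ^ 2 * (V k i * σ (V l i)) - c * σ c * σ (w l) * (V k i * σ (V 0 i)) -
              c * σ c * w k * (V 0 i * σ (V l i)) + w k * σ (w l) * (V 0 i * σ (V 0 i)) := by
          intro i
          simp only [map_sub, map_mul, hσ]
          ring
        simp only [h1, Finset.sum_add_distrib, Finset.sum_sub_distrib, ← Finset.mul_sum]
        rw [hc, ← hw l]
        change _ - _ * w k - _ + _ = _
        ring
      obtain ⟨q, Z, hq, hZ⟩ := key (fun k i => c * σ c * V k i - w k * V 0 i) <| funext fun i => by
        simp only [w, hc]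
        simp
      refine ⟨q * (c * σ c), fun k => Fin.cons (q * c * w k) (Z k),
        mul_ne_zero hq (mul_ne_zero h0 fun h => h0 ?_), fun k l => ?_⟩
      · rw [← hσ c, h, map_zero]
      · rw [Fin.sum_univ_succ]
        simp only [Fin.cons_zero, Fin.cons_succ, ← hZ, hG]
        simp only [map_mul, hσ]
        ring

end Denominators

section Complex

open Matrix Polynomial

open scoped ComplexOrder in
theorem exists_unitary_mul_col_eq_zero {k n : ℕ} {M N : Matrix (Fin k) (Fin n) ℂ}
    (h : M * Nᴴ = 0) : ∃ U : Matrix (Fin n) (Fin n) ℂ, U * Uᴴ = 1 ∧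
      ∀ j, (∀ i, (M * U) i j = 0) ∨ ∀ i, (N * U) i j = 0 := by
  have hA : (Nᴴ * N).IsHermitian := isHermitian_conjTranspose_mul_self N
  refine ⟨hA.eigenvectorUnitary, by
    simpa [star_eq_conjTranspose] using Unitary.coe_mul_star_self hA.eigenvectorUnitary,
    fun j => ?_⟩
  have hj := hA.mulVec_eigenvectorBasis j
  have hcol : ∀ (P : Matrix (Fin k) (Fin n) ℂ) (i),
      (P * (hA.eigenvectorUnitary : Matrix (Fin n) (Fin n) ℂ)) i j =
        (P *ᵥ ⇑(hA.eigenvectorBasis j)) i := fun P i => rfl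
  by_cases h0 : hA.eigenvalues j = 0
  · right
    intro i
    rw [h0, zero_smul, conjTranspose_mul_self_mulVec_eq_zero] at hj
    rw [hcol, hj, Pi.zero_apply]
  · left
    intro i
    have h1 : M *ᵥ ((Nᴴ * N) *ᵥ ⇑(hA.eigenvectorBasis j)) = 0 := by
      rw [mulVec_mulVec, ← Matrix.mul_assoc, h, Matrix.zero_mul, zero_mulVec]
    rw [hj, mulVec_smul] at h1
    rw [hcol, (smul_eq_zero.mp h1).resolve_left h0, Pi.zero_apply]

/-- Coefficientwise complex conjugation. -/
noncomputable def conjPoly : ℂ[X] →+* ℂ[X] := mapRingHom (starRingEnd ℂ)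

theorem conjPoly_conjPoly (p : ℂ[X]) : conjPoly (conjPoly p) = p := by
  ext n
  simp [conjPoly]

theorem eval_conjPoly (p : ℂ[X]) (μ : ℂ) :
    (conjPoly p).eval μ = star (p.eval (star μ)) := by
  have := eval_map_apply (starRingEnd ℂ) (star μ) (p := p)
  simpa [conjPoly] using this

theorem exists_eq_mul_sum_hermitian_squares {k n : ℕ} {W : Fin k → Fin n → ℂ[X]} {μ : ℂ}
    (h : ∀ i l, (∑ j, W i j * conjPoly (W l j)).eval μ = 0) :
    ∃ W' : Fin k → Fin n → ℂ[X], ∀ i l, ∑ j, W i j * conjPoly (W l j) =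
      (X - C μ) * conjPoly (X - C μ) * ∑ j, W' i j * conjPoly (W' l j) := by
  obtain ⟨U, hU, hcol⟩ := exists_unitary_mul_col_eq_zero
    (M := of fun i j => (W i j).eval μ) (N := of fun i j => (W i j).eval (star μ)) (by
      ext i l
      have := h i l
      simpa [mul_apply, eval_finsetSum, eval_conjPoly] using this)
  let Y : Fin k → Fin n → ℂ[X] := fun i j => ∑ a, W i a * C (U a j)
  have hY : ∀ i l, ∑ j, Y i j * conjPoly (Y l j) = ∑ j, W i j * conjPoly (W l j) := by
    intro i l
    have hU' : ∀ a b, ∑ j, C (U a j) * conjPoly (C (U b j)) = if a = b then 1 else 0 := by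
      intro a b
      have := congrFun (congrFun hU a) b
      rw [mul_apply, one_apply] at this
      have := congrArg (C : ℂ → ℂ[X]) this
      simpa [conjPoly, apply_ite C] using this
    calc ∑ j, Y i j * conjPoly (Y l j)
        = ∑ j, ∑ a, ∑ b, W i a * conjPoly (W l b) * (C (U a j) * conjPoly (C (U b j))) := by
          refine Finset.sum_congr rfl fun j _ => ?_
          simp only [Y, map_sum, map_mul, Finset.sum_mul_sum]
          exact Finset.sum_congr rfl fun a _ => Finset.sum_congr rfl fun b _ => by ring
      _ = ∑ a, ∑ b, W i a * conjPoly (W l b) * ∑ j, C (U a j) * conjPoly (C (U b j)) := by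
          rw [Finset.sum_comm]
          refine Finset.sum_congr rfl fun a _ => ?_
          rw [Finset.sum_comm]
          simp only [Finset.mul_sum]
      _ = _ := by simp [hU']
  have hdiv : ∀ j, ∃ Z : Fin k → ℂ[X], ∀ i l, Y i j * conjPoly (Y l j) =
      (X - C μ) * conjPoly (X - C μ) * (Z i * conjPoly (Z l)) := by
    intro j
    have hev : ∀ (ν : ℂ) i, (Y i j).eval ν = ∑ a, (W i a).eval ν * U a j := fun ν i => by
      simp [Y, eval_finsetSum]
    rcases hcol j with hj | hj
    · have : ∀ i, ∃ z, Y i j = (X - C μ) * z := fun i => by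
        refine dvd_iff_isRoot.mpr ?_
        rw [IsRoot, hev]
        simpa [mul_apply] using hj i
      choose Z hZ using this
      exact ⟨Z, fun i l => by rw [hZ, hZ, map_mul]; ring⟩
    · have : ∀ i, ∃ z, Y i j = conjPoly (X - C μ) * z := fun i => by
        have hc : conjPoly (X - C μ) = X - C (star μ) := by simp [conjPoly]
        rw [hc]
        refine dvd_iff_isRoot.mpr ?_
        rw [IsRoot, hev]
        simpa [mul_apply] using hj i
      choose Z hZ using this
      exact ⟨Z, fun i l => by rw [hZ, hZ, map_mul, conjPoly_conjPoly]; ring⟩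
  choose Z hZ using hdiv
  refine ⟨fun i j => Z j i, fun i l => ?_⟩
  rw [← hY, Finset.mul_sum]
  exact Finset.sum_congr rfl fun j _ => hZ j i l

theorem X_sub_C_mul_conjPoly_ne_zero (μ : ℂ) : (X - C μ) * conjPoly (X - C μ) ≠ 0 := by
  have hc : conjPoly (X - C μ) = X - C (star μ) := by simp [conjPoly]
  rw [hc]
  exact mul_ne_zero (X_sub_C_ne_zero _) (X_sub_C_ne_zero _)

theorem exists_sum_hermitian_squares_eq {n : ℕ} (a : Fin n → ℂ[X]) :
    ∃ c, ∑ i, a i * conjPoly (a i) = c * conjPoly c := by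
  induction hd : (∑ i, a i * conjPoly (a i)).natDegree using Nat.strong_induction_on
    generalizing a with
  | _ d ih =>
    by_cases h0 : (∑ i, a i * conjPoly (a i)).degree = 0
    · have h1 := eq_C_of_degree_eq_zero h0
      have h2 : (∑ i, a i * conjPoly (a i)).eval 0 =
          ((∑ i, ‖(a i).eval 0‖ ^ 2 : ℝ) : ℂ) := by
        simp [eval_finsetSum, eval_conjPoly, Complex.mul_conj']
      rw [h1, eval_C] at h2
      refine ⟨C (√(∑ i, ‖(a i).eval 0‖ ^ 2) : ℝ), ?_⟩
      rw [h1, h2]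
      simp only [conjPoly, coe_mapRingHom, map_C, Complex.conj_ofReal, ← C_mul, ← Complex.ofReal_mul]
      rw [Real.mul_self_sqrt (by positivity)]
    · by_cases hz : ∑ i, a i * conjPoly (a i) = 0
      · exact ⟨0, by simp [hz]⟩
      obtain ⟨μ, hμ⟩ := IsAlgClosed.exists_root _ h0
      obtain ⟨W, hW⟩ := exists_eq_mul_sum_hermitian_squares (k := 1) (W := fun _ => a)
        fun _ _ => hμ
      have hW := hW 0 0
      rw [hW] at hz
      obtain ⟨c, hc⟩ := ih _ (by
        rw [← hd, hW, mul_assoc, natDegree_mul (X_sub_C_ne_zero _), natDegree_mul]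
        · simp
          omega
        · exact right_ne_zero_of_mul (X_sub_C_mul_conjPoly_ne_zero μ)
        · exact right_ne_zero_of_mul hz
        · exact right_ne_zero_of_mul (mul_assoc (X - C μ) _ _ ▸ hz)) (W 0) rfl
      exact ⟨(X - C μ) * c, by rw [hW, hc, map_mul]; ring⟩

theorem eq_zero_of_sum_hermitian_squares_eq_zero {n : ℕ} (a : Fin n → ℂ[X])
    (h : ∑ i, a i * conjPoly (a i) = 0) (i : Fin n) : a i = 0 := by
  refine eq_zero_of_infinite_isRoot _ (Set.Infinite.mono ?_ (Set.infinite_range_of_injective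
    Complex.ofReal_injective))
  rintro _ ⟨x, rfl⟩
  have h1 : (∑ i, a i * conjPoly (a i)).eval (x : ℂ) =
      ((∑ i, ‖(a i).eval (x : ℂ)‖ ^ 2 : ℝ) : ℂ) := by
    simp [eval_finsetSum, eval_conjPoly, Complex.mul_conj']
  rw [h, eval_zero, eq_comm, Complex.ofReal_eq_zero,
    Finset.sum_eq_zero_iff_of_nonneg fun _ _ => by positivity] at h1
  simpa using h1 i (Finset.mem_univ i)

theorem exists_sum_hermitian_squares_of_denominator {m n : ℕ} {q : ℂ[X]} (hq : q ≠ 0)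
    {G : Fin m → Fin m → ℂ[X]} {W : Fin m → Fin n → ℂ[X]}
    (h : ∀ k l, q * conjPoly q * G k l = ∑ j, W k j * conjPoly (W l j)) :
    ∃ W' : Fin m → Fin n → ℂ[X], ∀ k l, G k l = ∑ j, W' k j * conjPoly (W' l j) := by
  induction hd : q.natDegree generalizing q W with
  | zero =>
    obtain ⟨c, rfl⟩ := natDegree_eq_zero.mp hd
    have hc : c ≠ 0 := by simpa using hq
    refine ⟨fun k j => C c⁻¹ * W k j, fun k l => ?_⟩
    have hc1 : C c⁻¹ * C c = 1 := by rw [← C_mul, inv_mul_cancel₀ hc, C_1]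
    have hc2 : conjPoly (C c⁻¹) * conjPoly (C c) = 1 := by rw [← map_mul, hc1, map_one]
    calc G k l = (C c⁻¹ * C c) * (conjPoly (C c⁻¹) * conjPoly (C c)) * G k l := by
          rw [hc1, hc2]; ring
      _ = C c⁻¹ * conjPoly (C c⁻¹) * (C c * conjPoly (C c) * G k l) := by ring
      _ = _ := by
          rw [h, Finset.mul_sum]
          exact Finset.sum_congr rfl fun j _ => by rw [map_mul]; ring
  | succ d ih =>
    obtain ⟨μ, hμ⟩ := IsAlgClosed.exists_root q fun h0 => by
      have := natDegree_eq_zero_iff_degree_le_zero.mpr h0.le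
      omega
    obtain ⟨W', hW'⟩ := exists_eq_mul_sum_hermitian_squares (W := W) (μ := μ) fun k l => by
      rw [← h, eval_mul, eval_mul, hμ, zero_mul, zero_mul]
    obtain ⟨r, rfl⟩ := dvd_iff_isRoot.mpr hμ
    have hr : r ≠ 0 := right_ne_zero_of_mul hq
    refine ih hr (W := W') (fun k l => ?_) ?_
    · apply mul_left_cancel₀ (X_sub_C_mul_conjPoly_ne_zero μ)
      rw [← hW', ← h, map_mul]
      ring
    · rw [natDegree_mul (X_sub_C_ne_zero _) hr, natDegree_X_sub_C] at hd
      omega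

theorem exists_re_im (p : ℂ[X]) : ∃ a b : ℝ[X],
    p = a.map Complex.ofRealHom + C Complex.I * b.map Complex.ofRealHom := by
  induction p using Polynomial.induction_on' with
  | add p q hp hq =>
    obtain ⟨a, b, rfl⟩ := hp
    obtain ⟨a', b', rfl⟩ := hq
    exact ⟨a + a', b + b', by simp only [Polynomial.map_add]; ring⟩
  | monomial n z =>
    refine ⟨monomial n z.re, monomial n z.im, ?_⟩
    rw [map_monomial, map_monomial, C_mul_monomial, ← map_add, mul_comm Complex.I]
    exact congrArg _ (Complex.re_add_im z).symm

theorem eq_of_map_eq_re_add_im {p a b : ℝ[X]} (h : p.map Complex.ofRealHom =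
    a.map Complex.ofRealHom + C Complex.I * b.map Complex.ofRealHom) : p = a := by
  ext n
  have := congrArg (fun r => (r.coeff n).re) h
  simpa using this

/-- A sum of rank-one squares of real polynomial matrices of size `m` is a sum of twice `m` ones. -/
theorem exists_gram_eq {m n : ℕ} (V : Fin m → Fin n → ℝ[X]) :
    ∃ A B : Fin m → Fin m → ℝ[X], ∀ k l,
      ∑ i, V k i * V l i = ∑ j, A k j * A l j + ∑ j, B k j * B l j := by
  have hreal : ∀ p : ℝ[X], conjPoly (p.map Complex.ofRealHom) = p.map Complex.ofRealHom := by
    intro p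
    ext n
    simp [conjPoly]
  obtain ⟨q, W, hq, hW⟩ := exists_denominator_sum_hermitian_squares conjPoly_conjPoly
    exists_sum_hermitian_squares_eq eq_zero_of_sum_hermitian_squares_eq_zero
    fun k i => (V k i).map Complex.ofRealHom
  obtain ⟨W, hW⟩ := exists_sum_hermitian_squares_of_denominator hq hW
  choose A B hAB using fun k j => exists_re_im (W k j)
  refine ⟨A, B, fun k l => eq_of_map_eq_re_add_im
    (b := ∑ j, B k j * A l j - ∑ j, A k j * B l j) ?_⟩
  have hI : conjPoly (C Complex.I) = -C Complex.I := by simp [conjPoly]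
  have hI2 : (C Complex.I : ℂ[X]) * C Complex.I = -1 := by simp [← C_mul]
  have := hW k l
  simp only [hreal] at this
  simp only [Polynomial.map_sum, Polynomial.map_mul, Polynomial.map_add, Polynomial.map_sub, this]
  rw [← Finset.sum_add_distrib, ← Finset.sum_sub_distrib, Finset.mul_sum, ← Finset.sum_add_distrib]
  refine Finset.sum_congr rfl fun j _ => ?_
  rw [hAB k j, hAB l j, map_add, map_mul, hreal, hreal, hI]
  linear_combination (-(B k j).map Complex.ofRealHom * (B l j).map Complex.ofRealHom) * hI2

end Complex

theorem exists_bound_of_finite {B : Type*} [CommRing B] {φ : Polynomial ℝ →+* B} (hφ : φ.Finite) :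
    ∃ n : ℕ, ∀ b : B, IsSumSq b → ∃ g : Fin n → B, b = ∑ i, g i ^ 2 := by
  algebraize [φ]
  obtain ⟨m, e, he⟩ := Module.Finite.exists_fin (R := Polynomial ℝ) (M := B)
  refine ⟨m + m, fun b hb => ?_⟩
  obtain ⟨n, g, rfl⟩ := hb.exists_fin
  have hg : ∀ i, ∃ v : Fin m → Polynomial ℝ, ∑ k, φ (v k) * e k = g i := fun i => by
    have : g i ∈ Submodule.span (Polynomial ℝ) (Set.range e) := he ▸ Submodule.mem_top
    exact (Submodule.mem_span_range_iff_exists_fun _).mp this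
  choose v hv using hg
  obtain ⟨P, Q, hPQ⟩ := exists_gram_eq fun k i => v i k
  have hexp : ∀ {s : ℕ} (M : Fin m → Fin s → Polynomial ℝ),
      ∑ i, (∑ k, φ (M k i) * e k) ^ 2 = ∑ k, ∑ l, φ (∑ i, M k i * M l i) * (e k * e l) := by
    intro s M
    simp only [sq, Finset.sum_mul_sum]
    simp only [map_sum, map_mul, Finset.sum_mul]
    rw [Finset.sum_comm]
    refine Finset.sum_congr rfl fun k _ => ?_
    rw [Finset.sum_comm]
    exact Finset.sum_congr rfl fun l _ => Finset.sum_congr rfl fun i _ => by ring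
  have hb : ∑ i, g i ^ 2 = ∑ j, (∑ k, φ (P k j) * e k) ^ 2 + ∑ j, (∑ k, φ (Q k j) * e k) ^ 2 := by
    simp only [← hv]
    rw [hexp fun k i => v i k, hexp, hexp]
    simp only [hPQ, map_add, add_mul, Finset.sum_add_distrib]
  rw [hb]
  exact exists_sum_sq_add ⟨_, rfl⟩ ⟨_, rfl⟩

theorem hasFinitePythagorasNumber_of_nonneg {f : MvPolynomial (Fin 3) ℝ} (hsf : Squarefree f)
    (hf : ∀ x : Fin 3 → ℝ, 0 ≤ MvPolynomial.eval x f) :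
    HasFinitePythagorasNumber (MvPolynomial (Fin 3) ℝ ⧸ Ideal.span {f}) := by
  let A := MvPolynomial (Fin 3) ℝ ⧸ Ideal.span {f}
  let π : MvPolynomial (Fin 3) ℝ →ₐ[ℝ] A ⧸ realSquaresIdeal A :=
    (Ideal.Quotient.mkₐ ℝ (realSquaresIdeal A)).comp (Ideal.Quotient.mkₐ ℝ (Ideal.span {f}))
  have hπ : Function.Surjective π :=
    (Ideal.Quotient.mkₐ_surjective ℝ _).comp (Ideal.Quotient.mkₐ_surjective ℝ _)
  have hmk : ∀ p, f ∣ p → (Ideal.Quotient.mk (Ideal.span {f}) p) = 0 := fun p hp =>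
    Ideal.Quotient.eq_zero_iff_mem.mpr (Ideal.mem_span_singleton.mpr hp)
  have hπf : π f = 0 := by
    change Ideal.Quotient.mk _ (Ideal.Quotient.mk _ f) = 0
    rw [hmk f dvd_rfl, map_zero]
  have hnil : ∀ (n : ℕ) (g : Fin n → MvPolynomial (Fin 3) ℝ), f ∣ ∑ i, g i ^ 2 →
      ∀ i, IsNilpotent (π (g i)) := by
    refine fun n g hg i => ⟨2, ?_⟩
    have h0 := hmk _ hg
    simp only [map_sum, map_pow] at h0
    have := Ideal.Quotient.eq_zero_iff_mem.mpr (sq_mem_realSquaresIdeal h0 i)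
    rwa [map_pow] at this
  have : Algebra.FiniteType ℝ (A ⧸ realSquaresIdeal A) := Algebra.FiniteType.of_surjective π hπ
  obtain ⟨φ, hφ⟩ := exists_finite_ringHom_polynomial_of_length_le (k := ℝ)
    (primeSpectrum_length_le_one hsf (isSumSq_algebraMap_of_nonneg _ f hf) (π := π.toRingHom)
      hπ hπf hnil)
  have h2 : (2 : A) * algebraMap ℝ A 2⁻¹ = 1 := by
    rw [← map_ofNat (algebraMap ℝ A) 2, ← map_mul, mul_inv_cancel₀ two_ne_zero, map_one]
  exact exists_bound_of_quotient h2 (exists_bound_of_finite hφ)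

/-- If `f ∈ ℝ[x, y, z]` is square-free and semidefinite on `ℝ³`, then the Pythagoras
number of `ℝ[x, y, z]/(f)` is finite. -/
theorem stmt19 (f : MvPolynomial (Fin 3) ℝ) (hsf : Squarefree f)
    (hsemi : (∀ x : Fin 3 → ℝ, 0 ≤ MvPolynomial.eval x f) ∨
      (∀ x : Fin 3 → ℝ, MvPolynomial.eval x f ≤ 0)) :
    HasFinitePythagorasNumber (MvPolynomial (Fin 3) ℝ ⧸ Ideal.span {f}) := by
  rcases hsemi with h | h
  · exact hasFinitePythagorasNumber_of_nonneg hsf h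
  · rw [← Ideal.span_singleton_neg]
    exact hasFinitePythagorasNumber_of_nonneg (f := -f)
      (fun x hx => hsf x ((dvd_neg).mp hx)) fun x => by simpa using h x
end
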